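/- arXiv:2107.14268 — 4 statements merged into one kernel-verified Lean document; each statement's English description precedes it below -/
import Mathlib

section
/- The image ι(𝒞) is dense in the virtual path space 𝓒. -/
/-- The path space 𝒞: sequences on ℕ₀ = {0,1,2,...} for which the cemetery state 0 is
absorbing, as a subset of ℕ₀^ℕ₀ with the product topology (ℕ₀ discrete). -/
def PathSpace : Set (ℕ → ℕ) := {x | ∀ i j : ℕ, i ≤ j → x i = 0 → x j = 0}

/-- The path space 𝒞_N: paths taking values in {0,...,N}. -/
def PathSpaceN (N : ℕ) : Set (ℕ → ℕ) := {x | x ∈ PathSpace ∧ ∀ i, x i ≤ N}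

/-- The successive indices I_{x,N}(j) (valued in ℕ∞) at which the path `x` visits the set
{0,...,N}; here `inf ∅ = ⊤ = ∞`. -/
noncomputable def hitIdx (x : ℕ → ℕ) (N : ℕ) : ℕ → ℕ∞
  | 0 => sInf {e : ℕ∞ | ∃ i : ℕ, e = (i : ℕ∞) ∧ x i ≤ N}
  | j + 1 => sInf {e : ℕ∞ | ∃ i : ℕ, e = (i : ℕ∞) ∧ hitIdx x N j < (i : ℕ∞) ∧ x i ≤ N}

/-- The projection P_N : 𝒞 → 𝒞_N: `(P_N x)(j) = x(I_{x,N}(j))` if `I_{x,N}(j) < ∞`,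
and `0` otherwise. -/
noncomputable def proj (N : ℕ) (x : ℕ → ℕ) (j : ℕ) : ℕ :=
  if hitIdx x N j = ⊤ then 0 else x (hitIdx x N j).toNat

/-- The virtual path space 𝓒, indexed by ℕ = {1,2,...} (as `ℕ+`), with the product
topology. -/
def VirtualPathSpace : Set (ℕ+ → ℕ → ℕ) :=
  {x | (∀ N : ℕ+, x N ∈ PathSpaceN N) ∧ ∀ N : ℕ+, proj N (x (N + 1)) = x N}

open Filter Topology

/-!
Let `c_N(n)` be the number of visits of `x` to `{0, ..., N}` before time `n`, so that
`P_N x (c_N(n)) = x n` whenever `x n ≤ N`. For `K ≤ M`, the path `P_M x` makes `c_K(n)` visits to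
`{0, ..., K}` before time `c_M(n)`, which gives `P_K ∘ P_M = P_K`. Hence, for a virtual path `x`,
the `N`-th coordinate of `ι (x M)` equals `x N` as soon as `N ≤ M`, and `ι (x M) → x` as `M → ∞`.
-/

theorem exists_lt_count_eq {p : ℕ → Prop} [DecidablePred p] {k n : ℕ} (h : k < Nat.count p n) :
    ∃ i < n, p i ∧ Nat.count p i = k :=
  have hk (hf : (Set.ofPred p).Finite) : k < hf.toFinset.card := h.trans_le (Nat.count_le_card hf n)
  ⟨Nat.nth p k, Nat.nth_lt_of_lt_count h, Nat.nth_mem k hk, Nat.count_nth hk⟩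

section Projection

variable {x : ℕ → ℕ} {K M N j n : ℕ}

theorem hitIdx_lt_coe_iff : hitIdx x N j < n ↔ j < Nat.count (x · ≤ N) n := by
  induction j generalizing n with
  | zero =>
    simp only [hitIdx, sInf_lt_iff, Set.mem_ofPred_eq]
    constructor
    · rintro ⟨_, ⟨i, rfl, hi⟩, hin⟩
      exact (Nat.zero_le _).trans_lt (Nat.count_strict_mono hi (Nat.cast_lt.mp hin))
    · intro h
      obtain ⟨i, hin, hi, -⟩ := exists_lt_count_eq h
      exact ⟨i, ⟨i, rfl, hi⟩, Nat.cast_lt.mpr hin⟩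
  | succ j ih =>
    simp only [hitIdx, sInf_lt_iff, Set.mem_ofPred_eq, ih]
    constructor
    · rintro ⟨_, ⟨i, rfl, hji, hi⟩, hin⟩
      exact (Nat.succ_le_of_lt hji).trans_lt (Nat.count_strict_mono hi (Nat.cast_lt.mp hin))
    · intro h
      obtain ⟨i, hin, hi, hij⟩ := exists_lt_count_eq h
      exact ⟨i, ⟨i, rfl, hij ▸ j.lt_succ_self, hi⟩, Nat.cast_lt.mpr hin⟩

theorem hitIdx_eq_coe_iff : hitIdx x N j = n ↔ x n ≤ N ∧ Nat.count (x · ≤ N) n = j := by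
  have between : hitIdx x N j = n ↔ ¬ hitIdx x N j < n ∧ hitIdx x N j < (n + 1 : ℕ) := by
    rw [Nat.cast_succ, ENat.lt_add_one_iff (ENat.natCast_ne_top n), not_lt, and_comm,
      le_antisymm_iff]
  rw [between, hitIdx_lt_coe_iff, hitIdx_lt_coe_iff, Nat.count_succ]
  grind

theorem proj_count (h : x n ≤ N) : proj N x (Nat.count (x · ≤ N) n) = x n := by
  simp [proj, hitIdx_eq_coe_iff.mpr ⟨h, rfl⟩]

/-- The value `0` is excluded because `proj N x` also takes it once `x` has no further visits. -/
theorem proj_eq_iff {v : ℕ} (hv : v ≠ 0) :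
    proj N x j = v ↔ ∃ n, x n = v ∧ v ≤ N ∧ Nat.count (x · ≤ N) n = j := by
  constructor
  · rintro rfl
    have finite : hitIdx x N j ≠ ⊤ := fun h => hv (if_pos h)
    obtain ⟨n, hn⟩ := ENat.ne_top_iff_exists.mp finite
    obtain ⟨hle, rfl⟩ := hitIdx_eq_coe_iff.mp hn.symm
    rw [proj_count hle]
    exact ⟨n, rfl, hle, rfl⟩
  · rintro ⟨n, rfl, hle, rfl⟩
    exact proj_count hle

theorem proj_le : proj N x j ≤ N := by
  by_cases h : proj N x j = 0
  · exact h.trans_le N.zero_le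
  · obtain ⟨_, _, hle, _⟩ := (proj_eq_iff h).mp rfl
    exact hle

theorem proj_eq_self (hx : ∀ i, x i ≤ N) : proj N x = x := by
  funext n
  have every_visit : Nat.count (x · ≤ N) n = n := Nat.count_iff_forall.mpr fun _ _ => hx _
  simpa only [every_visit] using proj_count (hx n)

theorem count_proj_count (hKM : K ≤ M) (n : ℕ) :
    Nat.count (proj M x · ≤ K) (Nat.count (x · ≤ M) n) = Nat.count (x · ≤ K) n := by
  induction n with
  | zero => simp
  | succ n ih =>
    by_cases hM : x n ≤ M
    · simp only [Nat.count_succ, if_pos hM, proj_count hM, ih]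
    · have hK : ¬ x n ≤ K := fun h => hM (h.trans hKM)
      simp only [Nat.count_succ, if_neg hM, if_neg hK, add_zero, ih]

theorem proj_proj (hKM : K ≤ M) : proj K (proj M x) = proj K x := by
  funext j
  have same_values {v : ℕ} (hv : v ≠ 0) : proj K (proj M x) j = v ↔ proj K x j = v := by
    simp only [proj_eq_iff hv]
    constructor
    · rintro ⟨_, ⟨n, hn, -, rfl⟩, hvK, hj⟩
      exact ⟨n, hn, hvK, (count_proj_count hKM n).symm.trans hj⟩
    · rintro ⟨n, hn, hvK, hj⟩
      exact ⟨_, ⟨n, hn, hvK.trans hKM, rfl⟩, hvK, (count_proj_count hKM n).trans hj⟩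
  by_cases h : proj K x j = 0
  · by_contra hne
    exact hne ((same_values fun h' => hne (h'.trans h.symm)).mp rfl).symm
  · exact (same_values h).mpr rfl

theorem proj_mem_pathSpaceN (hx : x ∈ PathSpace) : proj N x ∈ PathSpaceN N := by
  refine ⟨fun i j hij hi => ?_, fun _ => proj_le⟩
  by_contra hj
  obtain ⟨n, hn, -, rfl⟩ := (proj_eq_iff hj).mp rfl
  rcases hij.eq_or_lt with rfl | hlt
  · exact hj hi
  · obtain ⟨m, hmn, hm, rfl⟩ := exists_lt_count_eq hlt
    rw [proj_count hm] at hi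
    exact hj (hn.symm.trans (hx m n hmn.le hi))

theorem proj_mem_virtualPathSpace (hx : x ∈ PathSpace) :
    (fun N : ℕ+ => proj N x) ∈ VirtualPathSpace :=
  ⟨fun _ => proj_mem_pathSpaceN hx, fun N => proj_proj (Nat.le_succ N)⟩

end Projection

namespace VirtualPathSpace

variable {x : ℕ+ → ℕ → ℕ}

theorem proj_apply (hx : x ∈ VirtualPathSpace) {K M : ℕ+} (hKM : K ≤ M) :
    proj K (x M) = x K := by
  induction hKM using Succ.rec with
  | rfl => exact proj_eq_self (hx.1 K).2
  | succ M hKM ih =>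
    calc proj K (x (M + 1)) = proj K (proj M (x (M + 1))) :=
          (proj_proj ((PNat.coe_le_coe _ _).mpr hKM)).symm
      _ = proj K (x M) := by rw [hx.2 M]
      _ = x K := ih

theorem tendsto_proj (hx : x ∈ VirtualPathSpace) :
    Tendsto (fun M N : ℕ+ => proj N (x M)) atTop (𝓝 x) := by
  refine tendsto_pi_nhds.mpr fun N => tendsto_const_nhds.congr' ?_
  filter_upwards [eventually_ge_atTop N] with M hNM
  exact (proj_apply hx hNM).symm

end VirtualPathSpace

/-- The image ι(𝒞) is contained and dense in the virtual path space 𝓒 (density of a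
subset of 𝓒 in the subspace topology is expressed by 𝓒 being contained in its closure
in the ambient product space). -/
theorem iota_image_dense :
    (fun (x : ℕ → ℕ) (N : ℕ+) => proj N x) '' PathSpace ⊆ VirtualPathSpace ∧
    VirtualPathSpace ⊆ closure ((fun (x : ℕ → ℕ) (N : ℕ+) => proj N x) '' PathSpace) := by
  constructor
  · rintro _ ⟨x, hx, rfl⟩
    exact proj_mem_virtualPathSpace hx
  · intro x hx
    exact mem_closure_of_tendsto (VirtualPathSpace.tendsto_proj hx)
      (.of_forall fun M => ⟨x M, (hx.1 M).1, rfl⟩)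
end

section
/- A virtual path x = (x_N)_{N∈ℕ} ∈ 𝓒 lies in ι(𝒞) if and only if the limit x = lim_{N→∞} x_N exists in 𝒞 and x = ι(x). -/
/-! A sequence `y` takes only finitely many values up to time `j`, so for large `N` the projection
`P_N` deletes nothing up to then and `P_N y` agrees with `y` at `j`. Hence `P_N y → y` in the
product topology, and a virtual path of the form `ι(y)` converges to `y`. -/

open Filter Topology

theorem hitIdx_eq_self {y : ℕ → ℕ} {N j : ℕ} (h : ∀ i ≤ j, y i ≤ N) : hitIdx y N j = j := by
  induction j with
  | zero => exact nonpos_iff_eq_zero.1 (sInf_le ⟨0, rfl, h 0 le_rfl⟩)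
  | succ k ih =>
    have hk : hitIdx y N k = k := ih fun i hi => h i (hi.trans k.le_succ)
    rw [hitIdx, hk]
    refine IsLeast.csInf_eq ⟨⟨k + 1, rfl, mod_cast k.lt_succ_self, h _ le_rfl⟩, ?_⟩
    rintro _ ⟨i, rfl, hki, -⟩
    exact_mod_cast Order.add_one_le_of_lt hki

theorem proj_apply_eq_self {y : ℕ → ℕ} {N j : ℕ} (h : ∀ i ≤ j, y i ≤ N) : proj N y j = y j := by
  simp [proj, hitIdx_eq_self h]

theorem tendsto_proj_atTop (y : ℕ → ℕ) : Tendsto (fun N => proj N y) atTop (𝓝 y) := by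
  refine tendsto_pi_nhds.2 fun j => tendsto_nhds_of_eventually_eq ?_
  have hbound : ∀ᶠ N in atTop, ∀ i ≤ j, y i ≤ N :=
    (eventually_all_finite (Set.finite_Iic j)).2 fun i _ => eventually_ge_atTop (y i)
  exact hbound.mono fun _ => proj_apply_eq_self

/-- A virtual path x = (x_N)_{N∈ℕ} ∈ 𝓒 lies in ι(𝒞) if and only if the limit
y = lim_{N→∞} x_N exists in 𝒞 and x = ι(y). -/
theorem mem_iota_image_iff_tendsto (x : ℕ+ → ℕ → ℕ) (hx : x ∈ VirtualPathSpace) :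
    (∃ y ∈ PathSpace, x = fun N : ℕ+ => proj N y) ↔
    (∃ y, y ∈ PathSpace ∧ Filter.Tendsto x Filter.atTop (nhds y) ∧
      x = fun N : ℕ+ => proj N y) := by
  constructor
  · rintro ⟨y, hy, rfl⟩
    exact ⟨y, hy, (tendsto_proj_atTop y).comp tendsto_PNat_val_atTop_atTop, rfl⟩
  · rintro ⟨y, hy, -, hxy⟩
    exact ⟨y, hy, hxy⟩
end

section
/- The map sending each Markovian probability measure λ ∈ 𝓓₀ to its sequence of one-dimensional marginal distributions (λ ∘ y_N^{-1})_{N∈ℕ} is a homeomorphism from 𝓓₀ onto 𝓓₁. -/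
open MeasureTheory

/-- The space 𝓘 of virtual initial states: sequences (y_N)_{N∈ℕ} with y_N ∈ {0,...,N} and,
for each N, either y_{N+1} = y_N or y_{N+1} = N+1.  It carries the (subspace of the)
product topology and the corresponding Borel σ-algebra. -/
def VIS : Set (ℕ+ → ℕ) :=
  {y | (∀ N : ℕ+, y N ≤ (N : ℕ)) ∧ ∀ N : ℕ+, y (N + 1) = y N ∨ y (N + 1) = (N : ℕ) + 1}

/-- A Borel probability measure λ on 𝓘 is Markovian if, whenever the conditioning events
have positive probability, λ(y_{N+1} = a_{N+1} | y_1 = a_1, ..., y_N = a_N)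
= λ(y_{N+1} = a_{N+1} | y_N = a_N). -/
def Markovian (lam : ProbabilityMeasure ↥VIS) : Prop :=
  ∀ (N : ℕ+) (a : ℕ+ → ℕ), (∀ M : ℕ+, M ≤ N + 1 → a M ≤ (M : ℕ)) →
    (lam : Measure ↥VIS) {y | ∀ M : ℕ+, M ≤ N → (y : ℕ+ → ℕ) M = a M} ≠ 0 →
    (lam : Measure ↥VIS) {y | (y : ℕ+ → ℕ) N = a N} ≠ 0 →
    (lam : Measure ↥VIS)
        {y | (∀ M : ℕ+, M ≤ N → (y : ℕ+ → ℕ) M = a M) ∧ (y : ℕ+ → ℕ) (N + 1) = a (N + 1)} /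
      (lam : Measure ↥VIS) {y | ∀ M : ℕ+, M ≤ N → (y : ℕ+ → ℕ) M = a M}
    = (lam : Measure ↥VIS) {y | (y : ℕ+ → ℕ) N = a N ∧ (y : ℕ+ → ℕ) (N + 1) = a (N + 1)} /
        (lam : Measure ↥VIS) {y | (y : ℕ+ → ℕ) N = a N}

/-- Membership in the space 𝓓₁ of virtual distributions: a sequence of probability
measures ν_N on {0,...,N} (identified with their vectors of point masses) with
ν_N(a) ≥ ν_{N+1}(a) for all a ∈ {0,...,N}. -/
def MemD1 (ν : ℕ+ → ℕ → ℝ) : Prop :=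
  (∀ (N : ℕ+) (a : ℕ), 0 ≤ ν N a) ∧
  (∀ N : ℕ+, ∑ a ∈ Finset.range ((N : ℕ) + 1), ν N a = 1) ∧
  (∀ (N : ℕ+) (a : ℕ), (N : ℕ) < a → ν N a = 0) ∧
  (∀ (N : ℕ+) (a : ℕ), a ≤ (N : ℕ) → ν (N + 1) a ≤ ν N a)

/-- The space 𝓓₀ of Markovian probability measures on 𝓘, with the topology of weak
convergence. -/
def D0 : Set (ProbabilityMeasure ↥VIS) := {lam | Markovian lam}

/-- The space 𝓓₁, with the topology of pointwise convergence. -/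
def D1 : Set (ℕ+ → ℕ → ℝ) := {ν | MemD1 ν}

/-!
A path in `VIS` either stays or jumps to `N + 1` at time `N`, so the event `y_N = a, y_{N+1} = b` is
one of `∅`, `{y_{N+1} = b}` and `{y_N = a} \ {y_{N+1} = a}`. The laws of consecutive pairs are thus
functions of the marginals, and a Markovian law is determined by its marginals.

Conversely, given `ν` in `D1`, let the chain stay at `a` with probability `ν_{N+1}(a) / ν_N(a)`.
Running a single such step at time `N` and freezing the path afterwards turns a law with the right
marginals up to time `N` into one with the right marginals up to time `N + 1`, without changing it
on the events before. So the laws which are correct up to time `N` form a decreasing sequence of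
nonempty closed subsets of the compact space of probability measures on `VIS`, and a law in their
intersection is correct at all times.

Taking marginals is therefore a bijection; it is continuous because `{y_N = a}` is clopen, and `D0`
is compact because the Markov property, with denominators cleared, is closed.
-/

open scoped ENNReal

section Cylinders

variable {ι α : Type*} (X : Set (ι → α))

/-- The event that the path has value `a` at time `i`, in a space `X` of paths. -/
def coordEvent (i : ι) (a : α) : Set ↥X := {y | (y : ι → α) i = a}

/-- The event that the path agrees with `a` at all times up to and including `i`. -/
def initialCylinder [LE ι] (i : ι) (a : ι → α) : Set ↥X :=
  {y | ∀ j, j ≤ i → (y : ι → α) j = a j}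

variable {X}

/-- An event which is decided by the values of the path at the times up to and including `i`. -/
def IsInitialEvent [LE ι] (i : ι) (S : Set ↥X) : Prop :=
  ∀ y z : ↥X, (∀ j, j ≤ i → (y : ι → α) j = (z : ι → α) j) → (y ∈ S ↔ z ∈ S)

lemma IsInitialEvent.inter [LE ι] {i : ι} {S T : Set ↥X} (hS : IsInitialEvent i S)
    (hT : IsInitialEvent i T) : IsInitialEvent i (S ∩ T) :=
  fun y z hyz => and_congr (hS y z hyz) (hT y z hyz)

lemma IsInitialEvent.univ [LE ι] (i : ι) : IsInitialEvent i (Set.univ : Set ↥X) :=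
  fun _ _ _ => Iff.rfl

lemma isInitialEvent_coordEvent [LE ι] {i j : ι} (hij : i ≤ j) (a : α) :
    IsInitialEvent j (coordEvent X i a) :=
  fun _ _ hyz => Eq.congr_left (hyz i hij)

lemma isInitialEvent_initialCylinder [Preorder ι] {i j : ι} (hij : i ≤ j) (a : ι → α) :
    IsInitialEvent j (initialCylinder X i a) :=
  fun _ _ hyz => forall₂_congr fun k hk => Eq.congr_left (hyz k (hk.trans hij))

lemma initialCylinder_subset_coordEvent [Preorder ι] (i : ι) (a : ι → α) :
    initialCylinder X i a ⊆ coordEvent X i (a i) :=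
  fun _ hy => hy i le_rfl

lemma initialCylinder_of_isBot [PartialOrder ι] {i : ι} (hi : IsBot i) (a : ι → α) :
    initialCylinder X i a = coordEvent X i (a i) :=
  (initialCylinder_subset_coordEvent i a).antisymm fun y hy j hj => by
    rwa [hj.antisymm (hi j)]

lemma initialCylinder_congr [LE ι] {i : ι} {a b : ι → α} (h : ∀ j, j ≤ i → a j = b j) :
    initialCylinder X i a = initialCylinder X i b :=
  Set.ext fun _ => forall₂_congr fun j hj => Eq.congr_right (h j hj)

lemma initialCylinder_eq_biInter [Preorder ι] (i : ι) (a : ι → α) :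
    initialCylinder X i a = ⋂ j ∈ Set.Iic i, coordEvent X j (a j) := by
  ext y
  simp only [initialCylinder, coordEvent, Set.mem_ofPred_eq, Set.mem_iInter, Set.mem_Iic]

lemma initialCylinder_add_one [LinearOrder ι] [Add ι] [One ι] [SuccAddOrder ι]
    (i : ι) (a : ι → α) :
    initialCylinder X (i + 1) a =
      initialCylinder X i a ∩ coordEvent X (i + 1) (a (i + 1)) := by
  ext y
  simp only [initialCylinder, coordEvent, Set.mem_ofPred_eq, Set.mem_inter_iff,
    ← Order.succ_eq_add_one, Order.le_succ_iff_eq_or_le, or_imp, forall_and, forall_eq]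
  exact and_comm

lemma isPiSystem_range_initialCylinder [LinearOrder ι] :
    IsPiSystem (Set.range fun p : ι × (ι → α) => initialCylinder X p.1 p.2) := by
  rintro _ ⟨⟨i, a⟩, rfl⟩ _ ⟨⟨j, b⟩, rfl⟩ ⟨z, hza, hzb⟩
  refine ⟨(max i j, z), Set.ext fun y => ⟨fun hy => ⟨fun k hk => ?_, fun k hk => ?_⟩, ?_⟩⟩
  · exact (hy k (le_max_of_le_left hk)).trans (hza k hk)
  · exact (hy k (le_max_of_le_right hk)).trans (hzb k hk)
  · rintro ⟨hya, hyb⟩ k hk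
    rcases le_max_iff.1 hk with hki | hkj
    · exact (hya k hki).trans (hza k hki).symm
    · exact (hyb k hkj).trans (hzb k hkj).symm

variable [TopologicalSpace α] [DiscreteTopology α]

lemma isClopen_coordEvent (i : ι) (a : α) : IsClopen (coordEvent X i a) :=
  (isClopen_discrete {a}).preimage ((continuous_apply i).comp continuous_subtype_val)

lemma isClopen_initialCylinder [Preorder ι] [LocallyFiniteOrderBot ι] (i : ι) (a : ι → α) :
    IsClopen (initialCylinder X i a) := by
  rw [initialCylinder_eq_biInter]
  exact (Set.finite_Iic i).isClopen_biInter fun j _ => isClopen_coordEvent j (a j)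

lemma IsInitialEvent.isOpen [Preorder ι] [LocallyFiniteOrderBot ι] {i : ι} {S : Set ↥X}
    (hS : IsInitialEvent i S) : IsOpen S := by
  refine isOpen_iff_mem_nhds.2 fun y hy => ?_
  refine Filter.mem_of_superset ((isClopen_initialCylinder i y).isOpen.mem_nhds fun _ _ => rfl) ?_
  exact fun z hz => (hS z y hz).2 hy

lemma isTopologicalBasis_range_initialCylinder [LinearOrder ι] [LocallyFiniteOrderBot ι]
    [Nonempty ι] :
    TopologicalSpace.IsTopologicalBasis
      (Set.range fun p : ι × (ι → α) => initialCylinder X p.1 p.2) := by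
  refine TopologicalSpace.isTopologicalBasis_of_isOpen_of_nhds ?_ fun y U hyU hU => ?_
  · rintro _ ⟨⟨i, a⟩, rfl⟩
    exact (isClopen_initialCylinder i a).isOpen
  · obtain ⟨V, hV, rfl⟩ := isOpen_induced_iff.1 hU
    obtain ⟨I, u, hu, hIV⟩ := isOpen_pi_iff.1 hV y hyU
    obtain ⟨i, hi⟩ := I.bddAbove
    refine ⟨_, ⟨(i, y), rfl⟩, fun _ _ => rfl, fun z hz => hIV fun j hj => ?_⟩
    rw [hz j (hi hj)]
    exact (hu j hj).2

variable [MeasurableSpace α] [BorelSpace α] [Countable α] [Countable ι]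

lemma measurableSet_coordEvent (i : ι) (a : α) : MeasurableSet (coordEvent X i a) :=
  (isClopen_coordEvent i a).isOpen.measurableSet

lemma IsInitialEvent.measurableSet [Preorder ι] [LocallyFiniteOrderBot ι] {i : ι} {S : Set ↥X}
    (hS : IsInitialEvent i S) : MeasurableSet S :=
  hS.isOpen.measurableSet

lemma measure_ext_of_initialCylinder [LinearOrder ι] [LocallyFiniteOrderBot ι] [Nonempty ι]
    {μ ν : Measure ↥X} [IsProbabilityMeasure μ] [IsProbabilityMeasure ν]
    (h : ∀ i a, μ (initialCylinder X i a) = ν (initialCylinder X i a)) : μ = ν := by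
  refine ext_of_generate_finite _ ?_ isPiSystem_range_initialCylinder ?_ (by simp)
  · rw [BorelSpace.measurable_eq (α := ↥X),
      isTopologicalBasis_range_initialCylinder.borel_eq_generateFrom]
  · rintro _ ⟨⟨i, a⟩, rfl⟩
    exact h i a

lemma measure_congr_of_inter_coordEvent {μ ν : Measure ↥X} {S : Set ↥X} (hS : MeasurableSet S)
    (i : ι) (h : ∀ a, μ (S ∩ coordEvent X i a) = ν (S ∩ coordEvent X i a)) : μ S = ν S := by
  have sum_over_coord (ρ : Measure ↥X) : ρ S = ∑' a, ρ (S ∩ coordEvent X i a) := by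
    have cover : S ⊆ ⋃ a, coordEvent X i a := fun y _ =>
      Set.mem_iUnion.2 ⟨(y : ι → α) i, rfl⟩
    rw [← measure_iUnion (fun a b hab => Set.disjoint_left.2 fun y hya hyb =>
      hab (hya.2.symm.trans hyb.2)) fun a => hS.inter (measurableSet_coordEvent i a),
      ← Set.inter_iUnion, Set.inter_eq_left.2 cover]
  rw [sum_over_coord, sum_over_coord, tsum_congr h]

end Cylinders

lemma continuous_measure_of_isClopen {Ω : Type*} [TopologicalSpace Ω] [MeasurableSpace Ω]
    [OpensMeasurableSpace Ω] [HasOuterApproxClosed Ω] {S : Set Ω} (hS : IsClopen S) :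
    Continuous fun μ : ProbabilityMeasure Ω => (μ : Measure Ω) S := by
  simp only [← ProbabilityMeasure.ennreal_coeFn_eq_coeFn_toMeasure]
  exact ENNReal.continuous_coe.comp <| continuous_iff_continuousAt.2 fun _ =>
    ProbabilityMeasure.tendsto_measure_of_isClopen_of_tendsto Filter.tendsto_id hS

section MarkovProperty

variable {α : Type*} [MeasurableSpace α] {X : Set (ℕ+ → α)}

/-- The Markov property of the coordinate process at time `N`, with the denominators of the
conditional probabilities cleared: this makes it trivial on null events and closed under weak
limits. -/
def MarkovAt (N : ℕ+) (μ : Measure ↥X) : Prop :=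
  ∀ (a : ℕ+ → α) (b : α),
    μ (coordEvent X N (a N)) * μ (initialCylinder X N a ∩ coordEvent X (N + 1) b) =
      μ (initialCylinder X N a) * μ (coordEvent X N (a N) ∩ coordEvent X (N + 1) b)

lemma markovAt_iff_div_eq_div {N : ℕ+} {μ : Measure ↥X} [IsFiniteMeasure μ] :
    MarkovAt N μ ↔ ∀ a b, μ (initialCylinder X N a) ≠ 0 →
      μ (initialCylinder X N a ∩ coordEvent X (N + 1) b) / μ (initialCylinder X N a) =
        μ (coordEvent X N (a N) ∩ coordEvent X (N + 1) b) / μ (coordEvent X N (a N)) := by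
  refine forall₂_congr fun a b => ?_
  by_cases h0 : μ (initialCylinder X N a) = 0
  · simp only [h0, measure_mono_null Set.inter_subset_left h0, mul_zero, zero_mul, ne_eq,
      not_true_eq_false, false_imp_iff]
  · have present_ne_zero : μ (coordEvent X N (a N)) ≠ 0 := fun h =>
      h0 (measure_mono_null (initialCylinder_subset_coordEvent N a) h)
    rw [ENNReal.div_eq_div_iff present_ne_zero (measure_ne_top _ _) h0 (measure_ne_top _ _)]
    exact (imp_iff_right h0).symm

lemma MarkovAt.congr {M N : ℕ+} (hMN : M < N) {μ ν : Measure ↥X} (hμ : MarkovAt M μ)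
    (h : ∀ S, IsInitialEvent N S → μ S = ν S) : MarkovAt M ν := by
  intro a b
  have next := isInitialEvent_coordEvent (X := X) (PNat.add_one_le_iff.2 hMN) b
  have coord := isInitialEvent_coordEvent (X := X) hMN.le (a M)
  have past := isInitialEvent_initialCylinder (X := X) hMN.le a
  rw [← h _ coord, ← h _ (past.inter next), ← h _ past, ← h _ (coord.inter next)]
  exact hμ a b

variable [TopologicalSpace α] [DiscreteTopology α] [BorelSpace α] [Countable α]

lemma isClosed_setOf_markovAt (N : ℕ+) :
    IsClosed {μ : ProbabilityMeasure ↥X | MarkovAt N (μ : Measure ↥X)} := by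
  simp only [MarkovAt, Set.ofPred_forall]
  refine isClosed_iInter fun a => isClosed_iInter fun b => ?_
  have continuous_mul {S T : Set ↥X} (hS : IsClopen S) (hT : IsClopen T) :
      Continuous fun μ : ProbabilityMeasure ↥X => (μ : Measure ↥X) S * (μ : Measure ↥X) T :=
    (continuous_measure_of_isClopen hS).ennreal_mul (continuous_measure_of_isClopen hT)
      (fun _ => Or.inr (measure_ne_top _ _)) (fun _ => Or.inr (measure_ne_top _ _))
  have past := isClopen_initialCylinder (X := X) N a
  have present := isClopen_coordEvent (X := X) N (a N)
  have next := isClopen_coordEvent (X := X) (N + 1) b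
  exact isClosed_eq (continuous_mul present (past.inter next))
    (continuous_mul past (present.inter next))

theorem measure_ext_of_markovAt {μ ν : Measure ↥X} [IsProbabilityMeasure μ]
    [IsProbabilityMeasure ν] (hμ : ∀ N, MarkovAt N μ) (hν : ∀ N, MarkovAt N ν)
    (h : ∀ N a b, μ (coordEvent X N a ∩ coordEvent X (N + 1) b) =
      ν (coordEvent X N a ∩ coordEvent X (N + 1) b)) : μ = ν := by
  have marginal_eq (N : ℕ+) (a : α) : μ (coordEvent X N a) = ν (coordEvent X N a) :=
    measure_congr_of_inter_coordEvent (measurableSet_coordEvent N a) (N + 1) (h N a)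
  refine measure_ext_of_initialCylinder fun N a => ?_
  induction N using PNat.recOn with
  | one => rw [initialCylinder_of_isBot fun _ => one_le, marginal_eq]
  | succ N ih =>
    rw [initialCylinder_add_one]
    by_cases h0 : ν (coordEvent X N (a N)) = 0
    · have past_subset : initialCylinder X N a ∩ coordEvent X (N + 1) (a (N + 1)) ⊆
          coordEvent X N (a N) :=
        Set.inter_subset_left.trans (initialCylinder_subset_coordEvent N a)
      rw [measure_mono_null past_subset h0,
        measure_mono_null past_subset ((marginal_eq N (a N)).trans h0)]
    · rw [← ENNReal.mul_right_inj h0 (measure_ne_top _ _), hν N a, ← ih, ← h, ← marginal_eq, hμ N a]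

end MarkovProperty

namespace VIS

lemma apply_le (y : ↥VIS) (N : ℕ+) : (y : ℕ+ → ℕ) N ≤ N := y.2.1 N

lemma apply_add_one (y : ↥VIS) (N : ℕ+) :
    (y : ℕ+ → ℕ) (N + 1) = (y : ℕ+ → ℕ) N ∨ (y : ℕ+ → ℕ) (N + 1) = (N : ℕ) + 1 := y.2.2 N

instance : CompactSpace ↥VIS := by
  rw [← isCompact_iff_compactSpace]
  have box_compact : IsCompact (Set.univ.pi fun N : ℕ+ => Set.Iic (N : ℕ)) :=
    isCompact_univ_pi fun N => (Set.finite_Iic _).isCompact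
  refine box_compact.of_isClosed_subset ?_ fun y hy N _ => hy.1 N
  simp only [VIS, Set.ofPred_and, Set.ofPred_forall, Set.ofPred_or]
  exact (isClosed_iInter fun N => isClosed_le (by fun_prop) (by fun_prop)).inter
    (isClosed_iInter fun N => (isClosed_eq (by fun_prop) (by fun_prop)).union
      (isClosed_eq (by fun_prop) (by fun_prop)))

lemma coordEvent_of_lt {N : ℕ+} {b : ℕ} (hb : (N : ℕ) < b) : coordEvent VIS N b = ∅ :=
  Set.eq_empty_of_forall_notMem fun y hy => (hb.trans_eq hy.symm).not_ge (apply_le y N)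

lemma coordEvent_inter_add_one_of_ne {N : ℕ+} {a b : ℕ} (hb : b ≠ N + 1) :
    coordEvent VIS N a ∩ coordEvent VIS (N + 1) b =
      if a = b then coordEvent VIS (N + 1) b else ∅ := by
  ext y
  have := apply_add_one y N
  split_ifs <;> simp only [coordEvent, Set.mem_inter_iff, Set.mem_ofPred_eq,
    Set.mem_empty_iff_false, iff_false] <;> omega

lemma coordEvent_add_one_subset {N : ℕ+} {a : ℕ} (ha : a ≤ N) :
    coordEvent VIS (N + 1) a ⊆ coordEvent VIS N a := by
  rw [← Set.inter_eq_right, coordEvent_inter_add_one_of_ne (by lia), if_pos rfl]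

lemma coordEvent_inter_add_one_self {N : ℕ+} {a : ℕ} (ha : a ≤ N) :
    coordEvent VIS N a ∩ coordEvent VIS (N + 1) (N + 1) =
      coordEvent VIS N a \ coordEvent VIS (N + 1) a := by
  ext y
  have := apply_add_one y N
  simp only [coordEvent, Set.mem_inter_iff, Set.mem_sdiff, Set.mem_ofPred_eq]
  omega

lemma measure_coordEvent_inter_congr {μ ν : Measure ↥VIS} [IsFiniteMeasure μ]
    [IsFiniteMeasure ν] (h : ∀ N a, μ (coordEvent VIS N a) = ν (coordEvent VIS N a))
    (N : ℕ+) (a b : ℕ) :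
    μ (coordEvent VIS N a ∩ coordEvent VIS (N + 1) b) =
      ν (coordEvent VIS N a ∩ coordEvent VIS (N + 1) b) := by
  rcases lt_or_ge (N : ℕ) a with ha | ha
  · simp only [coordEvent_of_lt ha, Set.empty_inter, measure_empty]
  by_cases hb : b = N + 1
  · have measure_jump (ρ : Measure ↥VIS) [IsFiniteMeasure ρ] :
        ρ (coordEvent VIS N a ∩ coordEvent VIS (N + 1) (N + 1)) =
          ρ (coordEvent VIS N a) - ρ (coordEvent VIS (N + 1) a) := by
      rw [coordEvent_inter_add_one_self ha, measure_sdiff (coordEvent_add_one_subset ha)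
        (measurableSet_coordEvent _ _).nullMeasurableSet (measure_ne_top _ _)]
    rw [hb, measure_jump, measure_jump, h, h]
  · rw [coordEvent_inter_add_one_of_ne hb]
    split_ifs
    · exact h _ _
    · simp only [measure_empty]

lemma sum_measureReal_coordEvent (μ : Measure ↥VIS) [IsProbabilityMeasure μ] (N : ℕ+) :
    ∑ a ∈ Finset.range (N + 1), μ.real (coordEvent VIS N a) = 1 := by
  have coord_mem (y : ↥VIS) : (y : ℕ+ → ℕ) N ∈ (Finset.range (N + 1) : Set ℕ) := by
    simpa using Nat.lt_succ_of_le (apply_le y N)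
  exact (sum_measureReal_preimage_singleton (μ := μ) (f := fun y : ↥VIS => (y : ℕ+ → ℕ) N) _
    fun a _ => measurableSet_coordEvent N a).trans
      ((congrArg μ.real (Set.eq_univ_of_forall coord_mem)).trans probReal_univ)

lemma memD1_marginals (μ : Measure ↥VIS) [IsProbabilityMeasure μ] :
    MemD1 fun N a => μ.real (coordEvent VIS N a) := by
  refine ⟨fun N a => measureReal_nonneg, sum_measureReal_coordEvent μ, fun N a ha => ?_,
    fun N a ha => measureReal_mono (coordEvent_add_one_subset ha)⟩
  simp only [coordEvent_of_lt ha, measureReal_empty]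

end VIS

theorem markovian_iff_forall_markovAt (lam : ProbabilityMeasure ↥VIS) :
    Markovian lam ↔ ∀ N, MarkovAt N (lam : Measure ↥VIS) := by
  simp only [markovAt_iff_div_eq_div]
  refine ⟨fun h N a b h0 => ?_, fun h N a _ h0 _ => h N a (a (N + 1)) h0⟩
  rcases lt_or_ge ((N + 1 : ℕ+) : ℕ) b with hb | hb
  · simp only [VIS.coordEvent_of_lt hb, Set.inter_empty, measure_empty, ENNReal.zero_div]
  obtain ⟨y, hy⟩ := nonempty_of_measure_ne_zero h0
  let a' : ℕ+ → ℕ := Function.update (y : ℕ+ → ℕ) (N + 1) b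
  have a'_of_le (M : ℕ+) (hM : M ≤ N) : a' M = a M :=
    (Function.update_of_ne (PNat.lt_add_one_iff.2 hM).ne _ _).trans (hy M hM)
  have a'_add_one : a' (N + 1) = b := Function.update_self _ _ _
  have a'_le (M : ℕ+) (_ : M ≤ N + 1) : a' M ≤ M := by
    rcases eq_or_ne M (N + 1) with rfl | hM
    · rwa [a'_add_one]
    · rw [show a' M = (y : ℕ+ → ℕ) M from Function.update_of_ne hM _ _]
      exact VIS.apply_le y M
  have markov := h N a' a'_le
  change (lam : Measure ↥VIS) (initialCylinder VIS N a') ≠ 0 →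
    (lam : Measure ↥VIS) (coordEvent VIS N (a' N)) ≠ 0 →
    (lam : Measure ↥VIS) (initialCylinder VIS N a' ∩ coordEvent VIS (N + 1) (a' (N + 1))) /
        (lam : Measure ↥VIS) (initialCylinder VIS N a') =
      (lam : Measure ↥VIS) (coordEvent VIS N (a' N) ∩ coordEvent VIS (N + 1) (a' (N + 1))) /
        (lam : Measure ↥VIS) (coordEvent VIS N (a' N)) at markov
  rw [initialCylinder_congr a'_of_le, a'_of_le N le_rfl, a'_add_one] at markov
  exact markov h0 fun h => h0 (measure_mono_null (initialCylinder_subset_coordEvent N a) h)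

lemma MemD1.eq_of_eqOn_lt {ν ν' : ℕ+ → ℕ → ℝ} (hν : MemD1 ν) (hν' : MemD1 ν') {N : ℕ+}
    (h : ∀ a < (N : ℕ), ν N a = ν' N a) (a : ℕ) : ν N a = ν' N a := by
  rcases lt_trichotomy a N with ha | rfl | ha
  · exact h a ha
  · have total := (hν.2.1 N).trans (hν'.2.1 N).symm
    rw [Finset.sum_range_succ, Finset.sum_range_succ,
      Finset.sum_congr rfl fun a ha => h a (Finset.mem_range.1 ha)] at total
    exact add_left_cancel total
  · rw [hν.2.2.1 N a ha, hν'.2.2.1 N a ha]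

lemma MemD1.ratio_le_one {ν : ℕ+ → ℕ → ℝ} (hν : MemD1 ν) (N : ℕ+) (a : ℕ) :
    ν (N + 1) a / ν N a ≤ 1 := by
  rcases le_or_gt a N with ha | ha
  · exact div_le_one_of_le₀ (hν.2.2.2 N a ha) (hν.1 N a)
  · rw [hν.2.2.1 N a ha, div_zero]
    exact zero_le_one

lemma MemD1.ratio_mul {ν : ℕ+ → ℕ → ℝ} (hν : MemD1 ν) {N : ℕ+} {a : ℕ} (ha : a ≤ N) :
    ν (N + 1) a / ν N a * ν N a = ν (N + 1) a :=
  -- The value `0 / 0 = 0` does no harm: if `ν N a` vanishes, then so does `ν (N + 1) a`.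
  div_mul_cancel_of_imp fun h0 => ((hν.2.2.2 N a ha).trans_eq h0).antisymm (hν.1 _ _)

namespace VIS

/-- The path which follows `y` up to time `N` and is constantly `c` from time `N + 1` on. -/
def freeze (N : ℕ+) (y : ↥VIS) (c : ℕ) (hc : c = (y : ℕ+ → ℕ) N ∨ c = N + 1) : ↥VIS where
  val M := if M ≤ N then (y : ℕ+ → ℕ) M else c
  property := by
    have c_le : c ≤ N + 1 := by have := apply_le y N; lia
    refine ⟨fun M => ?_, fun M => ?_⟩
    · rcases le_or_gt M N with hM | hM
      · simpa only [if_pos hM] using apply_le y M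
      · have : (N : ℕ) < M := hM
        simp only [if_neg hM.not_ge]
        lia
    · rcases lt_trichotomy M N with hM | rfl | hM
      · simpa only [if_pos hM.le, if_pos (PNat.add_one_le_iff.2 hM)] using apply_add_one y M
      · simpa only [le_refl, if_true, if_neg (PNat.lt_add_right M 1).not_ge] using hc
      · simp only [if_neg hM.not_ge, if_neg (hM.trans (PNat.lt_add_right M 1)).not_ge, true_or]

lemma freeze_add_one {N : ℕ+} {y : ↥VIS} {c : ℕ} (hc : c = (y : ℕ+ → ℕ) N ∨ c = N + 1) :
    (freeze N y c hc : ℕ+ → ℕ) (N + 1) = c :=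
  if_neg (PNat.lt_add_right N 1).not_ge

lemma freeze_mem_iff {N : ℕ+} {S : Set ↥VIS} (hS : IsInitialEvent N S) {y : ↥VIS} {c : ℕ}
    (hc : c = (y : ℕ+ → ℕ) N ∨ c = N + 1) : freeze N y c hc ∈ S ↔ y ∈ S :=
  hS _ _ fun _ hM => if_pos hM

lemma measurable_coord (N : ℕ+) : Measurable fun y : ↥VIS => (y : ℕ+ → ℕ) N :=
  (measurable_pi_apply N).comp measurable_subtype_coe

lemma measurable_freeze {N : ℕ+} {c : ↥VIS → ℕ} (hc : Measurable c)
    (h : ∀ y : ↥VIS, c y = (y : ℕ+ → ℕ) N ∨ c y = N + 1) :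
    Measurable fun y => freeze N y (c y) (h y) := by
  refine Measurable.subtype_mk (measurable_pi_lambda _ fun M => ?_)
  split_ifs
  · exact measurable_coord M
  · exact hc

/-- The probability that a path at `a` at time `N` is at `b` at time `N + 1`, if it stays at `a`
with probability `r a` and otherwise jumps to `N + 1`. -/
noncomputable def stepProb (r : ℕ → ℝ≥0∞) (N : ℕ+) (a b : ℕ) : ℝ≥0∞ :=
  r a * (if a = b then 1 else 0) + (1 - r a) * (if (N : ℕ) + 1 = b then 1 else 0)

/-- The law of the path obtained from `y` by running a single step of the chain at time `N`,
with staying probabilities `r`, and freezing the path afterwards. -/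
noncomputable def stepLaw (r : ℕ → ℝ≥0∞) (N : ℕ+) (y : ↥VIS) : Measure ↥VIS :=
  r ((y : ℕ+ → ℕ) N) • Measure.dirac (freeze N y ((y : ℕ+ → ℕ) N) (Or.inl rfl)) +
    (1 - r ((y : ℕ+ → ℕ) N)) • Measure.dirac (freeze N y (N + 1) (Or.inr rfl))

lemma measurable_stepLaw (r : ℕ → ℝ≥0∞) (N : ℕ+) : Measurable (stepLaw r N) := by
  refine Measure.measurable_of_measurable_coe _ fun S hS => ?_
  have measurable_weight (f : ℕ → ℝ≥0∞) : Measurable fun y : ↥VIS => f ((y : ℕ+ → ℕ) N) :=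
    (measurable_from_top (f := f)).comp (measurable_coord N)
  have measurable_dirac_freeze {c : ↥VIS → ℕ} (hc : Measurable c)
      (h : ∀ y : ↥VIS, c y = (y : ℕ+ → ℕ) N ∨ c y = N + 1) :
      Measurable fun y => Measure.dirac (freeze N y (c y) (h y)) S :=
    (Measure.measurable_coe hS).comp (Measure.measurable_dirac.comp (measurable_freeze hc h))
  exact ((measurable_weight r).mul
      (measurable_dirac_freeze (measurable_coord N) fun _ => Or.inl rfl)).add
    ((measurable_weight fun a => 1 - r a).mul
      (measurable_dirac_freeze measurable_const fun _ => Or.inr rfl))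

section StepLaw

variable {r : ℕ → ℝ≥0∞} {N : ℕ+} {S : Set ↥VIS}

lemma stepLaw_apply (hr : ∀ a, r a ≤ 1) (hS : IsInitialEvent N S) (y : ↥VIS) :
    stepLaw r N y S = S.indicator 1 y := by
  have dirac_freeze {c : ℕ} (hc : c = (y : ℕ+ → ℕ) N ∨ c = N + 1) :
      Measure.dirac (freeze N y c hc) S = S.indicator 1 y :=
    (Measure.dirac_apply' _ hS.measurableSet).trans
      (Set.indicator_eq_indicator (freeze_mem_iff hS hc) rfl)
  simp only [stepLaw, Measure.add_apply, Measure.smul_apply, smul_eq_mul, dirac_freeze, ← add_mul,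
    add_tsub_cancel_of_le (hr _), one_mul]

lemma stepLaw_inter (hS : IsInitialEvent N S) (b : ℕ) (y : ↥VIS) :
    stepLaw r N y (S ∩ coordEvent VIS (N + 1) b) =
      S.indicator (fun z => stepProb r N ((z : ℕ+ → ℕ) N) b) y := by
  have mem_iff {c : ℕ} (hc : c = (y : ℕ+ → ℕ) N ∨ c = N + 1) :
      freeze N y c hc ∈ S ∩ coordEvent VIS (N + 1) b ↔ y ∈ S ∧ c = b :=
    and_congr (freeze_mem_iff hS hc) (Eq.congr_left (freeze_add_one hc))
  classical
  simp only [stepLaw, stepProb, Measure.add_apply, Measure.smul_apply, smul_eq_mul,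
    Measure.dirac_apply' _ (hS.measurableSet.inter (measurableSet_coordEvent (N + 1) b)),
    Set.indicator_apply, mem_iff, Pi.one_apply]
  by_cases hy : y ∈ S
  · simp only [hy, true_and, if_true]
  · simp only [hy, false_and, if_false, mul_zero, add_zero]

lemma bind_stepLaw_apply (hr : ∀ a, r a ≤ 1) (hS : IsInitialEvent N S) (μ : Measure ↥VIS) :
    μ.bind (stepLaw r N) S = μ S := by
  rw [Measure.bind_apply hS.measurableSet (measurable_stepLaw r N).aemeasurable]
  simp only [stepLaw_apply hr hS, lintegral_indicator_one hS.measurableSet]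

lemma bind_stepLaw_inter (hS : IsInitialEvent N S) {a : ℕ} (hSa : S ⊆ coordEvent VIS N a) (b : ℕ)
    (μ : Measure ↥VIS) :
    μ.bind (stepLaw r N) (S ∩ coordEvent VIS (N + 1) b) = stepProb r N a b * μ S := by
  have step_eq : ∀ y ∈ S, stepProb r N ((y : ℕ+ → ℕ) N) b = stepProb r N a b := fun y hy =>
    congrArg (stepProb r N · b) (hSa hy)
  rw [Measure.bind_apply (hS.measurableSet.inter (measurableSet_coordEvent _ _))
    (measurable_stepLaw r N).aemeasurable]
  simp only [stepLaw_inter hS, lintegral_indicator hS.measurableSet]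
  rw [setLIntegral_congr_fun hS.measurableSet step_eq, setLIntegral_const]

lemma isProbabilityMeasure_bind_stepLaw (hr : ∀ a, r a ≤ 1) (μ : Measure ↥VIS)
    [IsProbabilityMeasure μ] : IsProbabilityMeasure (μ.bind (stepLaw r N)) :=
  ⟨(bind_stepLaw_apply hr (IsInitialEvent.univ N) μ).trans measure_univ⟩

lemma markovAt_bind_stepLaw (hr : ∀ a, r a ≤ 1) (μ : Measure ↥VIS) :
    MarkovAt N (μ.bind (stepLaw r N)) := by
  intro a b
  have past := isInitialEvent_initialCylinder (X := VIS) (le_refl N) a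
  have present := isInitialEvent_coordEvent (X := VIS) (le_refl N) (a N)
  rw [bind_stepLaw_inter past (initialCylinder_subset_coordEvent N a),
    bind_stepLaw_inter present subset_rfl, bind_stepLaw_apply hr past,
    bind_stepLaw_apply hr present]
  ring

lemma bind_stepLaw_coordEvent_add_one {a : ℕ} (ha : a ≤ N) (μ : Measure ↥VIS) :
    μ.bind (stepLaw r N) (coordEvent VIS (N + 1) a) = r a * μ (coordEvent VIS N a) := by
  have no_jump : (N : ℕ) + 1 ≠ a := by lia
  rw [← Set.inter_eq_right.2 (coordEvent_add_one_subset ha),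
    bind_stepLaw_inter (isInitialEvent_coordEvent le_rfl a) subset_rfl, stepProb, if_pos rfl,
    if_neg no_jump, mul_one, mul_zero, add_zero]

end StepLaw

/-- The laws of paths which have the marginals `ν` up to time `N` and the Markov property at all
earlier times; a solution of the marginal problem is a common element of these sets. -/
def markovLawsUpTo (ν : ℕ+ → ℕ → ℝ) (N : ℕ+) : Set (ProbabilityMeasure ↥VIS) :=
  {μ | (∀ M ≤ N, ∀ a, (μ : Measure ↥VIS).real (coordEvent VIS M a) = ν M a) ∧
    ∀ M < N, MarkovAt M (μ : Measure ↥VIS)}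

lemma antitone_markovLawsUpTo (ν : ℕ+ → ℕ → ℝ) : Antitone (markovLawsUpTo ν) :=
  fun _ _ hMN _ hμ =>
    ⟨fun K hK => hμ.1 K (hK.trans hMN), fun K hK => hμ.2 K (hK.trans_le hMN)⟩

lemma continuous_measureReal_coordEvent (N : ℕ+) (a : ℕ) :
    Continuous fun μ : ProbabilityMeasure ↥VIS => (μ : Measure ↥VIS).real (coordEvent VIS N a) :=
  ENNReal.continuousOn_toReal.comp_continuous
    (continuous_measure_of_isClopen (isClopen_coordEvent N a)) fun _ => measure_ne_top _ _

lemma isClosed_markovLawsUpTo (ν : ℕ+ → ℕ → ℝ) (N : ℕ+) : IsClosed (markovLawsUpTo ν N) := by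
  simp only [markovLawsUpTo, Set.ofPred_and, Set.ofPred_forall]
  exact (isClosed_iInter fun M => isClosed_iInter fun _ => isClosed_iInter fun a =>
      isClosed_eq (continuous_measureReal_coordEvent M a) continuous_const).inter
    (isClosed_iInter fun M => isClosed_iInter fun _ => isClosed_setOf_markovAt M)

lemma exists_measureReal_coordEvent_one_eq {p : ℝ} (hp0 : 0 ≤ p) (hp1 : p ≤ 1) :
    ∃ μ : ProbabilityMeasure ↥VIS, (μ : Measure ↥VIS).real (coordEvent VIS 1 0) = p := by
  let zero : ↥VIS := ⟨fun _ => 0, fun _ => Nat.zero_le _, fun _ => Or.inl rfl⟩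
  let one : ↥VIS := ⟨fun _ => 1, fun N => N.pos, fun _ => Or.inl rfl⟩
  let μ : Measure ↥VIS :=
    ENNReal.ofReal p • Measure.dirac zero + ENNReal.ofReal (1 - p) • Measure.dirac one
  have μ_prob : IsProbabilityMeasure μ := ⟨by
    simp [μ, ← ENNReal.ofReal_add hp0 (sub_nonneg.2 hp1)]⟩
  refine ⟨⟨μ, μ_prob⟩, ?_⟩
  simp [μ, zero, one, measureReal_def, coordEvent, hp0]

lemma nonempty_markovLawsUpTo_one {ν : ℕ+ → ℕ → ℝ} (hν : MemD1 ν) :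
    (markovLawsUpTo ν 1).Nonempty := by
  have ν_le_one : ν 1 0 ≤ 1 :=
    (Finset.single_le_sum (fun a _ => hν.1 1 a) (by simp)).trans_eq (hν.2.1 1)
  obtain ⟨μ, hμ⟩ := exists_measureReal_coordEvent_one_eq (hν.1 1 0) ν_le_one
  refine ⟨μ, fun M hM => ?_, fun M hM => absurd hM not_lt_one⟩
  obtain rfl : M = 1 := hM.antisymm one_le
  refine (memD1_marginals _).eq_of_eqOn_lt hν fun a ha => ?_
  obtain rfl : a = 0 := Nat.lt_one_iff.1 ha
  exact hμ

lemma nonempty_markovLawsUpTo_add_one {ν : ℕ+ → ℕ → ℝ} (hν : MemD1 ν) {N : ℕ+}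
    (h : (markovLawsUpTo ν N).Nonempty) : (markovLawsUpTo ν (N + 1)).Nonempty := by
  obtain ⟨μ, μ_marginal, μ_markov⟩ := h
  let r : ℕ → ℝ≥0∞ := fun a => ENNReal.ofReal (ν (N + 1) a / ν N a)
  have hr (a : ℕ) : r a ≤ 1 := ENNReal.ofReal_le_one.2 (hν.ratio_le_one N a)
  let μ' : Measure ↥VIS := (μ : Measure ↥VIS).bind (stepLaw r N)
  have μ'_prob : IsProbabilityMeasure μ' := isProbabilityMeasure_bind_stepLaw hr _
  have μ'_apply (S : Set ↥VIS) (hS : IsInitialEvent N S) : μ' S = (μ : Measure ↥VIS) S :=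
    bind_stepLaw_apply hr hS _
  refine ⟨⟨μ', μ'_prob⟩, fun M hM => ?_, fun M hM => ?_⟩
  · rcases hM.eq_or_lt with rfl | hlt
    · refine (memD1_marginals μ').eq_of_eqOn_lt hν fun a ha => ?_
      have haN : a ≤ N := Nat.lt_succ_iff.1 ha
      rw [measureReal_def, bind_stepLaw_coordEvent_add_one haN, ENNReal.toReal_mul,
        ENNReal.toReal_ofReal (div_nonneg (hν.1 _ _) (hν.1 _ _)), ← measureReal_def,
        μ_marginal N le_rfl, hν.ratio_mul haN]
    · intro a
      have hMN : M ≤ N := PNat.lt_add_one_iff.1 hlt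
      exact (congrArg ENNReal.toReal (μ'_apply _ (isInitialEvent_coordEvent hMN a))).trans
        (μ_marginal M hMN a)
  · rcases (PNat.lt_add_one_iff.1 hM).eq_or_lt with rfl | hMN
    · exact markovAt_bind_stepLaw hr _
    · exact (μ_markov M hMN).congr hMN fun S hS => (μ'_apply S hS).symm

theorem exists_markov_law_of_memD1 {ν : ℕ+ → ℕ → ℝ} (hν : MemD1 ν) :
    ∃ μ : ProbabilityMeasure ↥VIS, (∀ N, MarkovAt N (μ : Measure ↥VIS)) ∧
      ∀ N a, (μ : Measure ↥VIS).real (coordEvent VIS N a) = ν N a := by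
  have nonempty (N : ℕ+) : (markovLawsUpTo ν N).Nonempty :=
    N.recOn (nonempty_markovLawsUpTo_one hν) fun _ => nonempty_markovLawsUpTo_add_one hν
  obtain ⟨μ, hμ⟩ := IsCompact.nonempty_iInter_of_directed_nonempty_isCompact_isClosed _
    (antitone_markovLawsUpTo ν).directed_ge nonempty
    (fun N => (isClosed_markovLawsUpTo ν N).isCompact) (isClosed_markovLawsUpTo ν)
  rw [Set.mem_iInter] at hμ
  exact ⟨μ, fun N => (hμ (N + 1)).2 N (PNat.lt_add_right N 1), fun N => (hμ N).1 N le_rfl⟩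

end VIS

instance : CompactSpace ↥D0 := by
  rw [← isCompact_iff_compactSpace]
  simp only [D0, markovian_iff_forall_markovAt, Set.ofPred_forall]
  exact (isClosed_iInter isClosed_setOf_markovAt).isCompact

/-- The map `𝓓₀ → 𝓓₁` sending a Markovian law to its sequence of one-dimensional marginals. -/
noncomputable def marginals (lam : ↥D0) : ↥D1 :=
  ⟨fun N a => (lam.1 : Measure ↥VIS).real (coordEvent VIS N a), VIS.memD1_marginals _⟩

lemma continuous_marginals : Continuous marginals :=
  Continuous.subtype_mk (continuous_pi fun N => continuous_pi fun a =>
    (VIS.continuous_measureReal_coordEvent N a).comp continuous_subtype_val) _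

lemma marginals_injective : Function.Injective marginals := by
  intro lam lam' h
  have marginal_eq (N : ℕ+) (a : ℕ) : (lam.1 : Measure ↥VIS) (coordEvent VIS N a) =
      (lam'.1 : Measure ↥VIS) (coordEvent VIS N a) :=
    (measureReal_eq_measureReal_iff).1 (congrFun₂ (congrArg Subtype.val h) N a)
  refine Subtype.ext (ProbabilityMeasure.toMeasure_injective ?_)
  exact measure_ext_of_markovAt ((markovian_iff_forall_markovAt _).1 lam.2)
    ((markovian_iff_forall_markovAt _).1 lam'.2) (VIS.measure_coordEvent_inter_congr marginal_eq)

lemma marginals_surjective : Function.Surjective marginals := by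
  rintro ⟨ν, hν⟩
  obtain ⟨μ, μ_markov, μ_marginal⟩ := VIS.exists_markov_law_of_memD1 hν
  exact ⟨⟨μ, (markovian_iff_forall_markovAt μ).2 μ_markov⟩,
    Subtype.ext (funext₂ μ_marginal)⟩

/-- The map sending each Markovian probability measure λ ∈ 𝓓₀ to its sequence of
one-dimensional marginal distributions (λ(y_N = ·))_{N∈ℕ} is a homeomorphism from 𝓓₀
onto 𝓓₁. -/
theorem d0_homeomorph_d1 :
    ∃ h : ↥D0 ≃ₜ ↥D1,
      ∀ (lam : ↥D0) (N : ℕ+) (b : ℕ),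
        ((h lam : ℕ+ → ℕ → ℝ) N b)
          = (((lam : ProbabilityMeasure ↥VIS) : Measure ↥VIS)
              {y | (y : ℕ+ → ℕ) N = b}).toReal := by
  have marginals_bijective : Function.Bijective marginals :=
    ⟨marginals_injective, marginals_surjective⟩
  let e : ↥D0 ≃ ↥D1 := Equiv.ofBijective marginals marginals_bijective
  exact ⟨continuous_marginals.homeoOfEquivCompactToT2 (f := e), fun _ _ _ => rfl⟩
end

section
/- For every compatible pair (ν, K) ∈ 𝓓₁ × 𝓚 there exists a probability space carrying a virtual Markov chain X = (X_N)_{N∈ℕ} such that, for every N ∈ ℕ, X_N is a Markov chain with initial distribution ν_N and transition matrix K_N. -/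
open MeasureTheory

/-- `X` is a Markov chain (on ℕ₀) under `P` with initial distribution `ν` and transition
matrix `K`. -/
def IsMarkovChain {Ω : Type*} [MeasurableSpace Ω] (P : Measure Ω)
    (X : ℕ → Ω → ℕ) (ν : ℕ → ℝ) (K : ℕ → ℕ → ℝ) : Prop :=
  (∀ i, Measurable (X i)) ∧
  ∀ (l : ℕ) (a : ℕ → ℕ),
    P {ω | ∀ i ≤ l, X i ω = a i}
      = ENNReal.ofReal (ν (a 0) * ∏ k ∈ Finset.Icc 1 l, K (a (k - 1)) (a k))

/-- `K` is a row-stochastic matrix on ℕ₀. -/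
def IsStochastic (K : ℕ → ℕ → ℝ) : Prop :=
  (∀ a b, 0 ≤ K a b) ∧ ∀ a, HasSum (K a) 1

/-- Membership in 𝒦_N: row-stochastic with `K a a = 1` for all `a ∉ {1,...,N}`. -/
def MemKN (N : ℕ) (K : ℕ → ℕ → ℝ) : Prop :=
  IsStochastic K ∧ ∀ a : ℕ, ¬(1 ≤ a ∧ a ≤ N) → K a a = 1

/-- `ν` is a probability vector on ℕ₀. -/
def IsProbVec (ν : ℕ → ℝ) : Prop := (∀ a, 0 ≤ ν a) ∧ HasSum ν 1

/-- `X` is a virtual Markov chain under `P`. -/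
def IsVMC {Ω : Type*} [MeasurableSpace Ω] (P : Measure Ω) (X : Ω → ℕ+ → ℕ → ℕ) : Prop :=
  (∀ᵐ ω ∂P, X ω ∈ VirtualPathSpace) ∧
  ∀ N : ℕ+, ∃ (ν : ℕ → ℝ) (K : ℕ → ℕ → ℝ),
    IsProbVec ν ∧ (∀ a : ℕ, (N : ℕ) < a → ν a = 0) ∧ MemKN N K ∧
    IsMarkovChain P (fun i ω => X ω N i) ν K

/-- The projection P_N : 𝒦_{N+1} → 𝒦_N on transition matrices. -/
noncomputable def projK (N : ℕ) (K : ℕ → ℕ → ℝ) : ℕ → ℕ → ℝ := fun a b =>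
  if 1 ≤ a ∧ a ≤ N then
    (if b ≤ N then
      (if K (N + 1) (N + 1) < 1 then
        K a b + K a (N + 1) * K (N + 1) b / (1 - K (N + 1) (N + 1))
      else if b = 0 then K a 0 + K a (N + 1)
      else K a b)
    else 0)
  else if a = b then 1 else 0

/-- Membership in the space 𝓚 of virtual transition matrices. -/
def MemVTM (K : ℕ+ → ℕ → ℕ → ℝ) : Prop :=
  (∀ N : ℕ+, MemKN N (K N)) ∧ ∀ N : ℕ+, projK N (K (N + 1)) = K N

/-- The constants C^K_{N,a} (with `C^K_{0,0} = 0` by convention). -/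
noncomputable def Ccoef (K : ℕ+ → ℕ → ℕ → ℝ) (N a : ℕ) : ℝ :=
  if N = 0 then 0
  else if K N.succPNat (N + 1) (N + 1) < 1 then
    K N.succPNat (N + 1) a / (1 - K N.succPNat (N + 1) (N + 1))
  else if a = 0 then 1 else 0

/-- Compatibility of a virtual distribution with a virtual transition matrix:
ν_N(a) = ν_{N+1}(a) + ν_{N+1}(N+1)·C^K_{N,a}. -/
def Compatible (ν : ℕ+ → ℕ → ℝ) (K : ℕ+ → ℕ → ℕ → ℝ) : Prop :=
  ∀ (N : ℕ+) (a : ℕ), a ≤ (N : ℕ) →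
    ν N a = ν (N + 1) a + ν (N + 1) ((N : ℕ) + 1) * Ccoef K (N : ℕ) a

/-!
Let `μ N` be the law on path space of the Markov chain with initial distribution `ν N` and
transition matrix `K N`. Skipping the visits to `N + 1` maps `μ (N + 1)` to `μ N`: conditioning on
the first step, the projected laws for the various starting states satisfy the first-step equations
of the chain at level `N` — this is where compatibility of `ν` and of the `K N` enters — and these
equations determine every cylinder probability. The levels are then glued into one process by
disintegrating each `μ (N + 1)` along the projection and running the resulting kernels as a
Markovian trajectory in the level `N`, so that each coordinate projects to the previous one almost
surely.
-/

open ProbabilityTheory Finset Preorder PiNat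
open scoped ENNReal

section Path

variable {α : Type*}

/-- The path that starts at `b` and then follows `x`. -/
def consPath (b : α) (x : ℕ → α) : ℕ → α
  | 0 => b
  | n + 1 => x n

@[simp]
lemma consPath_zero (b : α) (x : ℕ → α) : consPath b x 0 = b := rfl

@[simp]
lemma consPath_succ (b : α) (x : ℕ → α) (n : ℕ) : consPath b x (n + 1) = x n := rfl

lemma consPath_preimage_cylinder_succ [DecidableEq α] (b : α) (a : ℕ → α) (n : ℕ) :
    consPath b ⁻¹' cylinder a (n + 1) =
      if b = a 0 then cylinder (a ∘ Nat.succ) n else ∅ := by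
  ext x
  simp only [Set.mem_preimage, mem_cylinder_iff, Nat.forall_lt_succ_left, consPath_zero,
    consPath_succ]
  split_ifs with h <;> simp [h]

lemma isPiSystem_range_cylinder :
    IsPiSystem {s : Set (ℕ → α) | ∃ (x : ℕ → α) (n : ℕ), s = cylinder x n} := by
  rintro _ ⟨x, m, rfl⟩ _ ⟨y, n, rfl⟩ ⟨z, hzx, hzy⟩
  refine ⟨z, max m n, ?_⟩
  ext w
  rw [← mem_cylinder_iff_eq.1 hzx, ← mem_cylinder_iff_eq.1 hzy]
  simp only [Set.mem_inter_iff, mem_cylinder_iff, lt_sup_iff]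
  exact ⟨fun h i hi => hi.elim (h.1 i) (h.2 i),
    fun h => ⟨fun i hi => h i (.inl hi), fun i hi => h i (.inr hi)⟩⟩

lemma cylinder_succ_eq_preimage_frestrictLe (a : ℕ → α) (n : ℕ) :
    cylinder a (n + 1) = frestrictLe (π := fun _ => α) n ⁻¹' {frestrictLe n a} := by
  ext x
  simp [mem_cylinder_iff, funext_iff]

variable [MeasurableSpace α]

lemma measurable_consPath (b : α) : Measurable (consPath b) := by
  refine measurable_pi_iff.2 fun n => ?_
  cases n with
  | zero => exact measurable_const
  | succ n => exact measurable_pi_apply n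

lemma measurableSet_cylinder [MeasurableSingletonClass α] (a : ℕ → α) (n : ℕ) :
    MeasurableSet (cylinder (E := fun _ => α) a n) := by
  rw [cylinder_eq_pi]
  exact .pi (Finset.range n).countable_toSet fun i _ => measurableSet_singleton (a i)

/-- The path measure that draws the first state `b` with weight `w b` and continues according to
`Q b`. -/
noncomputable def firstStepMix (w : α → ℝ≥0∞) (Q : α → Measure (ℕ → α)) : Measure (ℕ → α) :=
  Measure.sum fun b => w b • (Q b).map (consPath b)

lemma firstStepMix_apply (w : α → ℝ≥0∞) (Q : α → Measure (ℕ → α)) {s : Set (ℕ → α)}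
    (hs : MeasurableSet s) : firstStepMix w Q s = ∑' b, w b * Q b (consPath b ⁻¹' s) := by
  simp only [firstStepMix, Measure.sum_apply _ hs, Measure.smul_apply,
    Measure.map_apply (measurable_consPath _) hs, smul_eq_mul]

lemma firstStepMix_add (v w : α → ℝ≥0∞) (Q : α → Measure (ℕ → α)) :
    firstStepMix (v + w) Q = firstStepMix v Q + firstStepMix w Q := by
  ext s hs
  simp only [firstStepMix_apply _ _ hs, Measure.add_apply, Pi.add_apply, add_mul, ENNReal.tsum_add]

lemma firstStepMix_smul (c : ℝ≥0∞) (w : α → ℝ≥0∞) (Q : α → Measure (ℕ → α)) :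
    firstStepMix (c • w) Q = c • firstStepMix w Q := by
  ext s hs
  simp only [firstStepMix_apply _ _ hs, Measure.smul_apply, Pi.smul_apply, smul_eq_mul, mul_assoc,
    ENNReal.tsum_mul_left]

instance (p : PMF α) (Q : α → Measure (ℕ → α)) [∀ b, IsProbabilityMeasure (Q b)] :
    IsProbabilityMeasure (firstStepMix p Q) :=
  ⟨by simp [firstStepMix_apply _ _ .univ, p.tsum_coe]⟩

lemma firstStepMix_cylinder_succ [MeasurableSingletonClass α] (w : α → ℝ≥0∞)
    (Q : α → Measure (ℕ → α)) (a : ℕ → α) (n : ℕ) :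
    firstStepMix w Q (cylinder a (n + 1)) = w (a 0) * Q (a 0) (cylinder (a ∘ Nat.succ) n) := by
  classical
  rw [firstStepMix_apply _ _ (measurableSet_cylinder a _), tsum_eq_single (a 0)]
  · rw [consPath_preimage_cylinder_succ, if_pos rfl]
  · intro b hb
    rw [consPath_preimage_cylinder_succ, if_neg hb, measure_empty, mul_zero]

variable [Countable α]

lemma ae_of_forall_cylinder {μ : Measure (ℕ → α)} {p : (ℕ → α) → Prop}
    (h : ∀ x, ¬ p x → ∃ n, μ (cylinder x n) = 0) : ∀ᵐ x ∂μ, p x := by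
  let : TopologicalSpace α := ⊥
  have : DiscreteTopology α := ⟨rfl⟩
  refine measure_null_of_locally_null _ fun x hx => ?_
  obtain ⟨n, hn⟩ := h x hx
  exact ⟨cylinder x n, mem_nhdsWithin_of_mem_nhds <|
    (isOpen_cylinder _ x n).mem_nhds (self_mem_cylinder x n), hn⟩

variable [MeasurableSingletonClass α]

lemma generateFrom_range_cylinder :
    MeasurableSpace.generateFrom {s : Set (ℕ → α) | ∃ (x : ℕ → α) (n : ℕ), s = cylinder x n} =
      MeasurableSpace.pi := by
  let : TopologicalSpace α := ⊥
  have : DiscreteTopology α := ⟨rfl⟩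
  rw [← (isTopologicalBasis_cylinders fun _ : ℕ => α).borel_eq_generateFrom]
  exact (BorelSpace.measurable_eq).symm

lemma measure_ext_of_cylinder {μ ν : Measure (ℕ → α)} [IsProbabilityMeasure μ]
    [IsProbabilityMeasure ν] (h : ∀ n a, μ (cylinder a n) = ν (cylinder a n)) : μ = ν :=
  ext_of_generate_finite _ generateFrom_range_cylinder.symm isPiSystem_range_cylinder
    (by rintro _ ⟨a, n, rfl⟩; exact h n a) (by simp)

end Path

lemma compProd_comap_map_prodMap {α β γ : Type*} [MeasurableSpace α] [MeasurableSpace β]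
    [MeasurableSpace γ] (ρ : Measure α) [SFinite ρ] (κ : Kernel β γ) [IsSFiniteKernel κ]
    {g : α → β} (hg : Measurable g) :
    (ρ ⊗ₘ κ.comap g hg).map (Prod.map g id) = ρ.map g ⊗ₘ κ := by
  ext s hs
  rw [Measure.map_apply (by fun_prop) hs,
    Measure.compProd_apply ((hg.prodMap measurable_id) hs), Measure.compProd_apply hs,
    lintegral_map (Kernel.measurable_kernel_prodMk_left hs) hg]
  rfl

section MarkovTraj

variable {X : ℕ → Type*} [∀ n, MeasurableSpace (X n)] (μ₀ : Measure (X 0))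
  (η : (n : ℕ) → Kernel (X n) (X (n + 1))) [∀ n, IsMarkovKernel (η n)]

/-- The law of the Markovian (possibly time-inhomogeneous) trajectory with initial law `μ₀` whose
`n`-th step is drawn from `η n`. -/
noncomputable def markovTraj : Measure (Π n, X n) :=
  Kernel.trajMeasure μ₀ fun n =>
    (η n).comap (fun x : Π i : Iic n, X i => x ⟨n, mem_Iic.2 le_rfl⟩) (measurable_pi_apply _)

instance [IsProbabilityMeasure μ₀] : IsProbabilityMeasure (markovTraj μ₀ η) := by
  unfold markovTraj; infer_instance

lemma map_eval_zero_markovTraj : (markovTraj μ₀ η).map (fun x => x 0) = μ₀ := by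
  have hmarg : (markovTraj μ₀ η).map (frestrictLe 0) =
      μ₀.map (MeasurableEquiv.piUnique fun i : Iic 0 => X i).symm := by
    rw [markovTraj, Kernel.trajMeasure, Measure.map_comp _ _ (by fun_prop),
      Kernel.traj_map_frestrictLe, Kernel.partialTraj_self]
    exact Measure.id_comp
  calc (markovTraj μ₀ η).map (fun x => x 0)
      = ((markovTraj μ₀ η).map (frestrictLe 0)).map
          (MeasurableEquiv.piUnique fun i : Iic 0 => X i) := by
        rw [Measure.map_map (by fun_prop) (by fun_prop)]
        rfl
    _ = μ₀ := by
        rw [hmarg]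
        exact MeasurableEquiv.map_map_symm _

variable [IsProbabilityMeasure μ₀]

lemma map_frestrictLe_prodMk_markovTraj (n : ℕ) :
    (markovTraj μ₀ η).map (fun x => (frestrictLe n x, x (n + 1))) =
      (markovTraj μ₀ η).map (frestrictLe n) ⊗ₘ
        (η n).comap (fun x : Π i : Iic n, X i => x ⟨n, mem_Iic.2 le_rfl⟩)
          (measurable_pi_apply _) :=
  Kernel.map_frestrictLe_trajMeasure_compProd_eq_map_trajMeasure.symm

lemma map_eval_prodMk_markovTraj (n : ℕ) :
    (markovTraj μ₀ η).map (fun x => (x n, x (n + 1))) =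
      (markovTraj μ₀ η).map (fun x => x n) ⊗ₘ η n := by
  let last : (Π i : Iic n, X i) → X n := fun x => x ⟨n, mem_Iic.2 le_rfl⟩
  have hlast : Measurable last := measurable_pi_apply _
  calc (markovTraj μ₀ η).map (fun x => (x n, x (n + 1)))
      = ((markovTraj μ₀ η).map fun x => (frestrictLe n x, x (n + 1))).map (Prod.map last id) := by
        rw [Measure.map_map (by fun_prop) (by fun_prop)]
        rfl
    _ = ((markovTraj μ₀ η).map (frestrictLe n)).map last ⊗ₘ η n := by
        rw [map_frestrictLe_prodMk_markovTraj, compProd_comap_map_prodMap]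
    _ = (markovTraj μ₀ η).map (fun x => x n) ⊗ₘ η n := by
        rw [Measure.map_map hlast (by fun_prop)]
        rfl

end MarkovTraj

section InverseLimit

/-- The law `μ (n + 1)` is disintegrated along `f n`, and the resulting conditional laws are used
as the steps of a Markovian trajectory. -/
theorem exists_measure_pi_of_map_eq {X : ℕ → Type*} [∀ n, MeasurableSpace (X n)]
    [∀ n, StandardBorelSpace (X n)] {μ : (n : ℕ) → Measure (X n)}
    [∀ n, IsProbabilityMeasure (μ n)] {f : (n : ℕ) → X (n + 1) → X n}
    (hf : ∀ n, Measurable (f n)) (hμ : ∀ n, (μ (n + 1)).map (f n) = μ n) :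
    ∃ P : Measure (Π n, X n), IsProbabilityMeasure P ∧
      (∀ n, P.map (fun ω => ω n) = μ n) ∧ ∀ᵐ ω ∂P, ∀ n, f n (ω (n + 1)) = ω n := by
  have (n : ℕ) : Nonempty (X n) := nonempty_of_isProbabilityMeasure (μ n)
  let η (n : ℕ) : Kernel (X n) (X (n + 1)) := condDistrib id (f n) (μ (n + 1))
  let P := markovTraj (μ 0) η
  have hpair (n : ℕ) (hn : P.map (fun ω => ω n) = μ n) :
      P.map (fun ω => (ω n, ω (n + 1))) = (μ (n + 1)).map (fun x => (f n x, x)) := by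
    rw [map_eval_prodMk_markovTraj, hn, ← hμ n]
    exact compProd_map_condDistrib measurable_id.aemeasurable
  have hlaw (n : ℕ) : P.map (fun ω => ω n) = μ n := by
    induction n with
    | zero => exact map_eval_zero_markovTraj (μ 0) η
    | succ n ih =>
      have := hf n
      have hsnd := congrArg (Measure.map Prod.snd) (hpair n ih)
      rw [Measure.map_map measurable_snd (by fun_prop),
        Measure.map_map measurable_snd (by fun_prop)] at hsnd
      exact hsnd.trans Measure.map_id
  refine ⟨P, inferInstance, hlaw, ae_all_iff.2 fun n => ?_⟩
  have := hf n
  have hgraph : MeasurableSet {p : X n × X (n + 1) | f n p.2 = p.1} :=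
    measurableSet_eq_fun (by fun_prop) (by fun_prop)
  have hae : ∀ᵐ p ∂P.map (fun ω => (ω n, ω (n + 1))), f n p.2 = p.1 := by
    rw [hpair n (hlaw n), ae_map_iff (by fun_prop) hgraph]
    exact ae_of_all _ fun _ => rfl
  exact ae_of_ae_map (by fun_prop) hae

lemma exists_measure_pnat_pi_of_map_eq {E : Type*} [MeasurableSpace E] [StandardBorelSpace E]
    {μ : ℕ+ → Measure E} [∀ N, IsProbabilityMeasure (μ N)] {f : ℕ+ → E → E}
    (hf : ∀ N, Measurable (f N)) (hμ : ∀ N, (μ (N + 1)).map (f N) = μ N) :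
    ∃ P : Measure (ℕ+ → E), IsProbabilityMeasure P ∧
      (∀ N, P.map (fun ω => ω N) = μ N) ∧ ∀ᵐ ω ∂P, ∀ N, f N (ω (N + 1)) = ω N := by
  obtain ⟨P, hP, hlaw, hglue⟩ := exists_measure_pi_of_map_eq (μ := fun n => μ n.succPNat)
    (fun n => hf n.succPNat) (fun n => hμ n.succPNat)
  let reindex : (ℕ → E) → (ℕ+ → E) := fun ω N => ω N.natPred
  have hreindex : Measurable reindex := by fun_prop
  refine ⟨P.map reindex, Measure.isProbabilityMeasure_map hreindex.aemeasurable, fun N => ?_,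
    ae_all_iff.2 fun N => ?_⟩
  · rw [Measure.map_map (measurable_pi_apply N) hreindex, ← PNat.succPNat_natPred N]
    exact hlaw N.natPred
  · have := hf N
    have hset : MeasurableSet {ω : ℕ+ → E | f N (ω (N + 1)) = ω N} :=
      measurableSet_eq_fun (by fun_prop) (by fun_prop)
    rw [ae_map_iff hreindex.aemeasurable hset]
    filter_upwards [hglue] with ω h
    have hN : (N + 1).natPred = N := rfl
    simpa [reindex, hN] using h N.natPred

end InverseLimit

section MarkovLaw

variable {α : Type*} [MeasurableSpace α] [Countable α] [MeasurableSingletonClass α]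

/-- The Markov kernel on a countable space whose row at `a` is the distribution `K a`. -/
noncomputable def stepKernel (K : α → PMF α) : Kernel α α :=
  ⟨fun a => (K a).toMeasure, measurable_of_countable _⟩

instance (K : α → PMF α) : IsMarkovKernel (stepKernel K) :=
  ⟨fun a => PMF.toMeasure.isProbabilityMeasure (K a)⟩

/-- The law, on path space, of the time-homogeneous Markov chain with initial distribution `ν` and
transition probabilities `K`. -/
noncomputable def markovLaw (ν : PMF α) (K : α → PMF α) : Measure (ℕ → α) :=
  markovTraj (X := fun _ => α) ν.toMeasure fun _ => stepKernel K

variable (ν : PMF α) (K : α → PMF α)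

instance : IsProbabilityMeasure (markovLaw ν K) := by
  unfold markovLaw; infer_instance

lemma markovLaw_cylinder_one (a : ℕ → α) : markovLaw ν K (cylinder a 1) = ν (a 0) := by
  have hcyl : cylinder a 1 = (fun x : ℕ → α => x 0) ⁻¹' {a 0} := by
    ext x; simp [mem_cylinder_iff]
  rw [hcyl, ← Measure.map_apply (measurable_pi_apply 0) (measurableSet_singleton _), markovLaw,
    map_eval_zero_markovTraj (X := fun _ => α), PMF.toMeasure_apply_singleton _ _
      (measurableSet_singleton _)]

lemma markovLaw_cylinder_add_two (a : ℕ → α) (n : ℕ) :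
    markovLaw ν K (cylinder a (n + 2)) =
      markovLaw ν K (cylinder a (n + 1)) * K (a n) (a (n + 1)) := by
  let past : Set (Π _ : Iic n, α) := {frestrictLe (π := fun _ => α) n a}
  have hpast : MeasurableSet past := measurableSet_singleton _
  have hcyl : cylinder a (n + 2) =
      (fun x : ℕ → α => (frestrictLe (π := fun _ => α) n x, x (n + 1))) ⁻¹'
        (past ×ˢ {a (n + 1)}) := by
    rw [Set.mk_preimage_prod, ← cylinder_succ_eq_preimage_frestrictLe]
    ext x
    simp [mem_cylinder_iff, Nat.forall_lt_succ_right]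
  rw [hcyl, ← Measure.map_apply (by fun_prop) (hpast.prod (measurableSet_singleton _)), markovLaw,
    map_frestrictLe_prodMk_markovTraj (X := fun _ => α),
    Measure.compProd_apply_prod hpast (measurableSet_singleton _), lintegral_singleton,
    Measure.map_apply (by fun_prop) hpast, ← cylinder_succ_eq_preimage_frestrictLe, mul_comm]
  congr 1
  exact PMF.toMeasure_apply_singleton _ _ (measurableSet_singleton _)

lemma markovLaw_cylinder_succ (a : ℕ → α) (n : ℕ) :
    markovLaw ν K (cylinder a (n + 1)) = ν (a 0) * ∏ k ∈ range n, K (a k) (a (k + 1)) := by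
  induction n with
  | zero => simp [markovLaw_cylinder_one]
  | succ n ih => rw [markovLaw_cylinder_add_two, ih, prod_range_succ, mul_assoc]

lemma markovLaw_eq_firstStepMix :
    markovLaw ν K = firstStepMix ν fun b => markovLaw (K b) K := by
  refine measure_ext_of_cylinder fun n a => ?_
  rcases n with _ | _ | n
  · simp only [cylinder_zero, measure_univ]
  · simp only [firstStepMix_cylinder_succ, markovLaw_cylinder_succ, range_zero, prod_empty,
      cylinder_zero, measure_univ]
  · rw [firstStepMix_cylinder_succ, markovLaw_cylinder_succ, markovLaw_cylinder_succ,
      prod_range_succ', mul_comm (∏ k ∈ range n, _)]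
    rfl

variable {ν K}

lemma firstStepMix_eq_markovLaw {s : Set α} {Q : α → Measure (ℕ → α)}
    [∀ b, IsProbabilityMeasure (Q b)] (hQ : ∀ b ∈ s, Q b = firstStepMix (K b) Q)
    (hK : ∀ b ∈ s, (K b).support ⊆ s) (hν : ν.support ⊆ s) :
    firstStepMix ν Q = markovLaw ν K := by
  refine measure_ext_of_cylinder fun n a => ?_
  induction n generalizing a ν with
  | zero => simp only [cylinder_zero, measure_univ]
  | succ n ih =>
    rw [markovLaw_eq_firstStepMix, firstStepMix_cylinder_succ, firstStepMix_cylinder_succ]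
    by_cases ha : a 0 ∈ ν.support
    · rw [hQ _ (hν ha), ih (hK _ (hν ha))]
    · rw [(ν.apply_eq_zero_iff _).2 ha, zero_mul, zero_mul]

variable (ν K)

lemma ae_markovLaw_mem_support :
    ∀ᵐ x ∂markovLaw ν K, x 0 ∈ ν.support ∧ ∀ n, x (n + 1) ∈ (K (x n)).support := by
  refine ae_of_forall_cylinder fun x hx => ?_
  rw [not_and_or, not_forall] at hx
  rcases hx with h | ⟨n, h⟩
  · exact ⟨1, by rw [markovLaw_cylinder_one, (ν.apply_eq_zero_iff _).2 h]⟩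
  · exact ⟨n + 2, by rw [markovLaw_cylinder_add_two, ((K (x n)).apply_eq_zero_iff _).2 h, mul_zero]⟩

variable {K}

lemma ae_markovLaw_pure_eq_const {a : α} (ha : K a = PMF.pure a) :
    ∀ᵐ x ∂markovLaw (K a) K, x = fun _ => a := by
  filter_upwards [ae_markovLaw_mem_support (K a) K] with x ⟨hx₀, hx⟩
  ext n
  induction n with
  | zero => simpa [ha] using hx₀
  | succ n ih => simpa [ih, ha] using hx n

end MarkovLaw

lemma pmf_eq_pure_of_apply_eq_one {α : Type*} {p : PMF α} {a : α} (h : p a = 1) :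
    p = PMF.pure a := by
  ext b
  rcases eq_or_ne b a with rfl | hb
  · rw [h, PMF.pure_apply_self]
  · rw [PMF.pure_apply_of_ne _ _ hb, p.apply_eq_zero_iff, (p.apply_eq_one_iff a).1 h]
    exact hb

section FirstIndex

/-- The first index at which `p` holds, or `⊤` if there is none: the infimum over the possibly empty
set of indices in the definition of `hitIdx`. -/
noncomputable def firstIdx (p : ℕ → Prop) : ℕ∞ := ⨅ (i : ℕ) (_ : p i), (i : ℕ∞)

lemma firstIdx_eq_sInf (p : ℕ → Prop) : firstIdx p = sInf {e : ℕ∞ | ∃ i : ℕ, e = i ∧ p i} := by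
  refine le_antisymm (le_sInf ?_) (le_iInf₂ fun i hi => sInf_le ⟨i, rfl, hi⟩)
  rintro _ ⟨i, rfl, hi⟩
  exact iInf₂_le i hi

lemma firstIdx_eq_zero {p : ℕ → Prop} (h : p 0) : firstIdx p = 0 :=
  nonpos_iff_eq_zero.1 <| iInf₂_le 0 h

lemma firstIdx_eq_firstIdx_succ_add_one {p : ℕ → Prop} (h : ¬ p 0) :
    firstIdx p = firstIdx (fun i => p (i + 1)) + 1 := by
  rw [firstIdx, ← inf_iInf_nat_succ, firstIdx, ENat.iInf₂_add]
  simp [h]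

lemma measurable_firstIdx {δ : Type*} [MeasurableSpace δ] {p : δ → ℕ → Prop}
    (hp : ∀ i, MeasurableSet {x | p x i}) : Measurable fun x => firstIdx (p x) := by
  classical
  have : BorelSpace ℕ∞ := ⟨borel_eq_top_of_countable.symm⟩
  simp only [firstIdx, iInf_eq_if]
  exact .iInf fun i => .ite (hp i) measurable_const measurable_const

end FirstIndex

section Proj

variable {x : ℕ → ℕ} {b N : ℕ}

lemma hitIdx_zero : hitIdx x N 0 = firstIdx fun i => x i ≤ N :=
  (firstIdx_eq_sInf _).symm

lemma hitIdx_succ (j : ℕ) :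
    hitIdx x N (j + 1) = firstIdx fun i => hitIdx x N j < i ∧ x i ≤ N :=
  (firstIdx_eq_sInf _).symm

lemma hitIdx_consPath_succ_of_eq {j : ℕ} {h : ℕ∞} (hj : hitIdx (consPath b x) N j = h + 1) :
    hitIdx (consPath b x) N (j + 1) = firstIdx (fun i => h < i ∧ x i ≤ N) + 1 := by
  rw [hitIdx_succ, hj, firstIdx_eq_firstIdx_succ_add_one (by simp)]
  simp

lemma hitIdx_consPath_zero_of_le (hb : b ≤ N) : hitIdx (consPath b x) N 0 = 0 := by
  rw [hitIdx_zero]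
  exact firstIdx_eq_zero hb

lemma hitIdx_consPath_succ_of_le (hb : b ≤ N) (j : ℕ) :
    hitIdx (consPath b x) N (j + 1) = hitIdx x N j + 1 := by
  induction j with
  | zero =>
    rw [hitIdx_succ, hitIdx_consPath_zero_of_le hb, firstIdx_eq_firstIdx_succ_add_one (by simp),
      hitIdx_zero]
    simp
  | succ j ih => rw [hitIdx_consPath_succ_of_eq ih, ← hitIdx_succ]

lemma hitIdx_consPath_of_lt (hb : N < b) (j : ℕ) :
    hitIdx (consPath b x) N j = hitIdx x N j + 1 := by
  induction j with
  | zero =>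
    rw [hitIdx_zero, hitIdx_zero, firstIdx_eq_firstIdx_succ_add_one (by simpa using hb)]
    rfl
  | succ j ih => rw [hitIdx_consPath_succ_of_eq ih, ← hitIdx_succ]

lemma proj_consPath_apply_of_hitIdx_eq {j k : ℕ}
    (h : hitIdx (consPath b x) N j = hitIdx x N k + 1) :
    proj N (consPath b x) j = proj N x k := by
  rw [proj, proj, h]
  by_cases hk : hitIdx x N k = ⊤
  · simp [hk]
  · rw [if_neg hk, if_neg (by simpa using hk), ENat.toNat_add hk ENat.one_ne_top, ENat.toNat_one,
      consPath_succ]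

lemma proj_consPath_of_le (hb : b ≤ N) : proj N (consPath b x) = consPath b (proj N x) := by
  ext (_ | j)
  · simp [proj, hitIdx_consPath_zero_of_le hb]
  · exact proj_consPath_apply_of_hitIdx_eq (hitIdx_consPath_succ_of_le hb j)

lemma proj_consPath_of_lt (hb : N < b) : proj N (consPath b x) = proj N x :=
  funext fun j => proj_consPath_apply_of_hitIdx_eq (hitIdx_consPath_of_lt hb j)

lemma proj_eq_zero_of_forall_lt (hx : ∀ i, N < x i) : proj N x = 0 := by
  have hx' (i : ℕ) : ¬ x i ≤ N := (hx i).not_ge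
  ext (_ | j) <;> simp [proj, hitIdx_zero, hitIdx_succ, firstIdx, hx']

lemma proj_zero : proj N 0 = 0 := by
  ext j
  simp [proj]

lemma measurable_hitIdx (N j : ℕ) : Measurable fun x : ℕ → ℕ => hitIdx x N j := by
  have hle (i : ℕ) : MeasurableSet {x : ℕ → ℕ | x i ≤ N} :=
    measurableSet_le (measurable_pi_apply i) measurable_const
  induction j with
  | zero => simpa only [hitIdx_zero] using measurable_firstIdx hle
  | succ j ih =>
    simp only [hitIdx_succ]
    exact measurable_firstIdx fun i => (ih (.of_discrete (s := Set.Iio (i : ℕ∞)))).inter (hle i)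

lemma measurable_proj (N : ℕ) : Measurable (proj N) := by
  have heval : Measurable fun p : (ℕ → ℕ) × ℕ => p.1 p.2 :=
    measurable_from_prod_countable_left fun n => measurable_pi_apply n
  refine measurable_pi_iff.2 fun j => ?_
  have hidx := measurable_hitIdx N j
  exact .ite (hidx (measurableSet_singleton ⊤)) measurable_const
    (heval.comp (measurable_id.prodMk ((measurable_from_top (f := ENat.toNat)).comp hidx)))

end Proj

section Trace

/-- The distribution of the first state `≤ N` visited by a chain that sits at `N + 1`, draws its
steps there from `p`, and is sent to the cemetery `0` if it never leaves `N + 1`. -/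
noncomputable def returnProb (N : ℕ) (p : PMF ℕ) (a : ℕ) : ℝ≥0∞ :=
  if p (N + 1) < 1 then p a / (1 - p (N + 1)) else if a = 0 then 1 else 0

/-- The distribution of the first state `≤ N` visited by a chain with initial distribution `ν` that
draws its steps at `N + 1` from `p`. Specialised to rows, this is the projection of transition
matrices and the compatibility relation. -/
noncomputable def traceDist (N : ℕ) (p ν : PMF ℕ) : ℕ → ℝ≥0∞ :=
  (Set.Iic N).indicator (ν + ν (N + 1) • returnProb N p)

variable {N : ℕ} {K : ℕ → PMF ℕ}

/-- The law, seen from `{0, …, N}`, of the chain started from the row `K b`. -/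
noncomputable def projLaw (N : ℕ) (K : ℕ → PMF ℕ) (b : ℕ) : Measure (ℕ → ℕ) :=
  (markovLaw (K b) K).map (proj N)

instance (b : ℕ) : IsProbabilityMeasure (projLaw N K b) :=
  Measure.isProbabilityMeasure_map (measurable_proj N).aemeasurable

lemma projLaw_eq_dirac {a : ℕ} (ha : K a = PMF.pure a) (h0 : proj N (fun _ => a) = 0) :
    projLaw N K a = Measure.dirac 0 := by
  rw [projLaw, Measure.map_congr (g := fun _ => 0)
    ((ae_markovLaw_pure_eq_const ha).mono fun x hx => by rw [hx, h0]), Measure.map_const,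
    measure_univ, one_smul]

/-- The first state is kept if it is at most `N`, and skipped if it is `N + 1`. -/
lemma map_proj_markovLaw_eq_add {ν : PMF ℕ} (hν : ν.support ⊆ Set.Iic (N + 1)) :
    (markovLaw ν K).map (proj N) =
      firstStepMix ((Set.Iic N).indicator ν) (projLaw N K) + ν (N + 1) • projLaw N K (N + 1) := by
  ext s hs
  have hproj := measurable_proj N
  have hterm (b : ℕ) : ν b * markovLaw (K b) K (consPath b ⁻¹' (proj N ⁻¹' s)) =
      (Set.Iic N).indicator ν b * projLaw N K b (consPath b ⁻¹' s) +
        if b = N + 1 then ν (N + 1) * projLaw N K (N + 1) s else 0 := by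
    rcases lt_trichotomy b (N + 1) with hb | rfl | hb
    · have hb : b ≤ N := Nat.lt_succ_iff.1 hb
      rw [Set.indicator_of_mem (Set.mem_Iic.2 hb), if_neg (by omega), add_zero, projLaw,
        Measure.map_apply hproj (measurable_consPath b hs)]
      simp only [← Set.preimage_comp]
      congr 2 with x
      simp [proj_consPath_of_le hb]
    · rw [Set.indicator_of_notMem (by simp), if_pos rfl, zero_mul, zero_add, projLaw,
        Measure.map_apply hproj hs]
      simp only [← Set.preimage_comp]
      congr 2 with x
      simp [proj_consPath_of_lt]
    · have hνb : ν b = 0 := (ν.apply_eq_zero_iff b).2 fun h => (hν h).not_gt hb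
      rw [if_neg hb.ne', hνb, Set.indicator_of_notMem (by simp; omega), zero_mul, zero_mul,
        add_zero]
  rw [Measure.map_apply hproj hs, markovLaw_eq_firstStepMix, firstStepMix_apply _ _ (hproj hs),
    Measure.add_apply, firstStepMix_apply _ _ hs, tsum_congr hterm, ENNReal.tsum_add, tsum_ite_eq]
  rfl

lemma projLaw_zero_eq_firstStepMix (h0 : K 0 = PMF.pure 0) :
    projLaw N K 0 = firstStepMix (PMF.pure 0) (projLaw N K) := by
  have hsupp : (PMF.pure 0).support ⊆ Set.Iic (N + 1) := by simp
  have hind : (Set.Iic N).indicator (PMF.pure 0) = (PMF.pure 0 : ℕ → ℝ≥0∞) := by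
    rw [Set.indicator_eq_self, ← PMF.support]
    simp
  have hne : (PMF.pure 0 : PMF ℕ) (N + 1) = 0 := PMF.pure_apply_of_ne _ _ N.succ_ne_zero
  rw [projLaw, h0, map_proj_markovLaw_eq_add hsupp, hind, hne, zero_smul, add_zero]

/-- The first-step equation `Q = M + q • Q` at `N + 1` is solved for `Q` when `q < 1`; otherwise the
chain is stuck at `N + 1` and its projection is the zero path. -/
lemma projLaw_succ_eq_firstStepMix (h0 : K 0 = PMF.pure 0)
    (hK : (K (N + 1)).support ⊆ Set.Iic (N + 1)) :
    projLaw N K (N + 1) =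
      firstStepMix ((Set.Iic N).indicator (returnProb N (K (N + 1)))) (projLaw N K) := by
  by_cases hq : K (N + 1) (N + 1) < 1
  · have hret : (Set.Iic N).indicator (returnProb N (K (N + 1))) =
        (1 - K (N + 1) (N + 1))⁻¹ • (Set.Iic N).indicator (K (N + 1)) := by
      ext a
      simp only [Set.indicator_apply, returnProb, if_pos hq, Pi.smul_apply, smul_eq_mul,
        ENNReal.div_eq_inv_mul, mul_ite, mul_zero]
    have hq0 : 1 - K (N + 1) (N + 1) ≠ 0 := (tsub_pos_of_lt hq).ne'
    have hstep := map_proj_markovLaw_eq_add (K := K) hK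
    rw [← projLaw] at hstep
    rw [hret, firstStepMix_smul]
    ext s _
    have hs' := congrArg (fun μ => μ s) hstep
    simp only [Measure.add_apply, Measure.smul_apply, smul_eq_mul] at hs' ⊢
    have hsolve : (1 - K (N + 1) (N + 1)) * projLaw N K (N + 1) s =
        firstStepMix ((Set.Iic N).indicator (K (N + 1))) (projLaw N K) s := by
      rw [ENNReal.sub_mul fun _ _ => measure_ne_top _ _, one_mul]
      exact (ENNReal.eq_sub_of_add_eq (by finiteness) hs'.symm).symm
    rw [← hsolve, ENNReal.inv_mul_cancel_left hq0 (by finiteness)]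
  · have hstay : K (N + 1) = PMF.pure (N + 1) :=
      pmf_eq_pure_of_apply_eq_one (le_antisymm (PMF.coe_le_one _ _) (not_lt.1 hq))
    have hret : (Set.Iic N).indicator (returnProb N (K (N + 1))) = PMF.pure 0 := by
      ext a
      rcases eq_or_ne a 0 with rfl | ha <;> simp [returnProb, *]
    rw [projLaw_eq_dirac hstay (proj_eq_zero_of_forall_lt fun _ => Nat.lt_succ_self N), hret,
      ← projLaw_zero_eq_firstStepMix h0, projLaw_eq_dirac h0 proj_zero]

lemma map_proj_markovLaw_eq_firstStepMix (h0 : K 0 = PMF.pure 0)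
    (hK : (K (N + 1)).support ⊆ Set.Iic (N + 1)) {ν : PMF ℕ}
    (hν : ν.support ⊆ Set.Iic (N + 1)) :
    (markovLaw ν K).map (proj N) = firstStepMix (traceDist N (K (N + 1)) ν) (projLaw N K) := by
  have htrace : traceDist N (K (N + 1)) ν = (Set.Iic N).indicator ν +
      ν (N + 1) • (Set.Iic N).indicator (returnProb N (K (N + 1))) :=
    (Set.indicator_add' _ _ _).trans <| congrArg _ <|
      Set.indicator_const_smul _ (ν (N + 1)) (returnProb N (K (N + 1)))
  rw [map_proj_markovLaw_eq_add hν, projLaw_succ_eq_firstStepMix h0 hK, ← firstStepMix_smul,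
    ← firstStepMix_add, htrace]

theorem map_proj_markovLaw {K' : ℕ → PMF ℕ} {ν ν' : PMF ℕ} (h0 : K 0 = PMF.pure 0)
    (hK : ∀ b ≤ N + 1, (K b).support ⊆ Set.Iic (N + 1)) (hν : ν.support ⊆ Set.Iic (N + 1))
    (hK' : ∀ b ≤ N, ⇑(K' b) = traceDist N (K (N + 1)) (K b))
    (hν' : ⇑ν' = traceDist N (K (N + 1)) ν) :
    (markovLaw ν K).map (proj N) = markovLaw ν' K' := by
  have hsupp {p p' : PMF ℕ} (h : ⇑p' = traceDist N (K (N + 1)) p) :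
      p'.support ⊆ Set.Iic N := by
    rw [PMF.support, h]
    exact Set.support_indicator_subset
  rw [map_proj_markovLaw_eq_firstStepMix h0 (hK _ le_rfl) hν, ← hν']
  refine firstStepMix_eq_markovLaw (s := Set.Iic N) (fun b hb => ?_)
    (fun b hb => hsupp (hK' b hb)) (hsupp hν')
  rw [hK' b hb]
  exact map_proj_markovLaw_eq_firstStepMix h0 (hK _ le_rfl) (hK b (Nat.le_succ_of_le hb))

end Trace

lemma ae_markovLaw_mem_pathSpaceN {N : ℕ} {ν : PMF ℕ} {K : ℕ → PMF ℕ} (h0 : K 0 = PMF.pure 0)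
    (hK : ∀ b ≤ N, (K b).support ⊆ Set.Iic N) (hν : ν.support ⊆ Set.Iic N) :
    ∀ᵐ x ∂markovLaw ν K, x ∈ PathSpaceN N := by
  filter_upwards [ae_markovLaw_mem_support ν K] with x ⟨hx₀, hx⟩
  refine ⟨fun i j hij hi => ?_, fun i => ?_⟩
  · induction j, hij using Nat.le_induction with
    | base => exact hi
    | succ j _ ih => simpa [ih, h0] using hx j
  · induction i with
    | zero => exact hν hx₀
    | succ i ih => exact hK _ ih (hx i)

section RealVectors

variable {ν : ℕ → ℝ} {K : ℕ → ℕ → ℝ}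

/-- A real probability vector as a probability mass function. -/
noncomputable def IsProbVec.toPMF (hν : IsProbVec ν) : PMF ℕ :=
  ⟨fun a => ENNReal.ofReal (ν a), by
    simpa only [← ENNReal.ofReal_tsum_of_nonneg hν.1 hν.2.summable, hν.2.tsum_eq,
      ENNReal.ofReal_one] using (ENNReal.summable (f := fun a => ENNReal.ofReal (ν a))).hasSum⟩

lemma IsProbVec.toPMF_apply (hν : IsProbVec ν) (a : ℕ) : hν.toPMF a = ENNReal.ofReal (ν a) := rfl

lemma IsProbVec.support_toPMF_subset (hν : IsProbVec ν) {N : ℕ} (h : ∀ a, N < a → ν a = 0) :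
    hν.toPMF.support ⊆ Set.Iic N := fun a ha =>
  not_lt.1 fun hNa => ha <| by
    change ENNReal.ofReal (ν a) = 0
    rw [h a hNa, ENNReal.ofReal_zero]

/-- The rows of a real stochastic matrix as probability mass functions. -/
noncomputable def IsStochastic.toPMF (hK : IsStochastic K) (a : ℕ) : PMF ℕ :=
  IsProbVec.toPMF ⟨hK.1 a, hK.2 a⟩

lemma IsStochastic.toPMF_apply (hK : IsStochastic K) (a b : ℕ) :
    hK.toPMF a b = ENNReal.ofReal (K a b) := rfl

lemma MemKN.toPMF_zero {N : ℕ} (hK : MemKN N K) : hK.1.toPMF 0 = PMF.pure 0 :=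
  pmf_eq_pure_of_apply_eq_one <| by
    rw [hK.1.toPMF_apply, hK.2 0 (by omega), ENNReal.ofReal_one]

lemma MemKN.apply_zero {N : ℕ} (hK : MemKN N K) (a : ℕ) : K 0 a = if a = 0 then 1 else 0 := by
  rw [← ENNReal.toReal_ofReal (hK.1.1 0 a), ← hK.1.toPMF_apply, hK.toPMF_zero, PMF.pure_apply]
  split_ifs <;> simp

lemma isMarkovChain_of_map_eq_markovLaw {Ω : Type*} [MeasurableSpace Ω] {P : Measure Ω}
    {X : Ω → ℕ → ℕ} (hX : Measurable X) (hν : IsProbVec ν) (hK : IsStochastic K)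
    (h : P.map X = markovLaw hν.toPMF hK.toPMF) : IsMarkovChain P (fun i ω => X ω i) ν K := by
  refine ⟨fun i => (measurable_pi_apply i).comp hX, fun l a => ?_⟩
  have hcyl : {ω | ∀ i ≤ l, X ω i = a i} = X ⁻¹' cylinder a (l + 1) := by
    ext ω
    simp [mem_cylinder_iff]
  have hprod : ∏ k ∈ Icc 1 l, K (a (k - 1)) (a k) = ∏ k ∈ range l, K (a k) (a (k + 1)) := by
    rw [range_eq_Ico, ← Ico_add_one_right_eq_Icc]
    exact (prod_Ico_add' (fun k => K (a (k - 1)) (a k)) 0 l 1).symm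
  rw [hcyl, ← Measure.map_apply hX (measurableSet_cylinder a _), h, markovLaw_cylinder_succ, hprod,
    ENNReal.ofReal_mul (hν.1 _), ENNReal.ofReal_prod_of_nonneg fun _ _ => hK.1 _ _]
  rfl

end RealVectors

section Compatible

variable {ν : ℕ+ → ℕ → ℝ} {K : ℕ+ → ℕ → ℕ → ℝ}

lemma MemD1.isProbVec (hν : MemD1 ν) (N : ℕ+) : IsProbVec (ν N) := by
  refine ⟨hν.1 N, hν.2.1 N ▸ hasSum_sum_of_ne_finset_zero fun a ha => hν.2.2.1 N a ?_⟩
  simpa [Nat.lt_succ_iff] using ha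

lemma MemVTM.apply_eq_zero_of_lt (hK : MemVTM K) {N : ℕ+} {a b : ℕ} (ha : a ≤ N) (hb : N < b) :
    K N a b = 0 := by
  rw [← hK.2 N]
  simp [projK, hb.not_ge, (ha.trans_lt hb).ne]

lemma MemVTM.support_toPMF_subset (hK : MemVTM K) (N : ℕ+) :
    ∀ a ≤ (N : ℕ), ((hK.1 N).1.toPMF a).support ⊆ Set.Iic (N : ℕ) := fun _ ha =>
  IsProbVec.support_toPMF_subset _ fun _ hb => hK.apply_eq_zero_of_lt ha hb

/-- With `C^K` in place of the case distinction, the projection of matrices reads as the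
compatibility relation for rows. -/
lemma MemVTM.apply_eq_add_mul_Ccoef (hK : MemVTM K) (N : ℕ+) {a b : ℕ} (ha : a ≤ N) (hb : b ≤ N) :
    K N a b = K (N + 1) a b + K (N + 1) a (N + 1) * Ccoef K N b := by
  have hsucc : (N : ℕ).succPNat = N + 1 := rfl
  rcases Nat.eq_zero_or_pos a with rfl | ha'
  · simp [(hK.1 N).apply_zero, (hK.1 (N + 1)).apply_zero]
  rw [← hK.2 N, projK, if_pos ⟨ha', ha⟩, if_pos hb, Ccoef, if_neg N.ne_zero, hsucc]
  split_ifs with h hb0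
  · rw [mul_div_assoc]
  · rw [hb0, mul_one]
  · rw [mul_zero, add_zero]

lemma Ccoef_nonneg {N : ℕ+} (hK : IsStochastic (K (N + 1))) (a : ℕ) : 0 ≤ Ccoef K N a := by
  have hsucc : (N : ℕ).succPNat = N + 1 := rfl
  rw [Ccoef, if_neg N.ne_zero, hsucc]
  split_ifs with h
  · exact div_nonneg (hK.1 _ _) (sub_nonneg.2 h.le)
  · exact zero_le_one
  · exact le_rfl

lemma returnProb_toPMF {N : ℕ+} (hK : IsStochastic (K (N + 1))) (a : ℕ) :
    returnProb N (hK.toPMF (N + 1)) a = ENNReal.ofReal (Ccoef K N a) := by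
  have hsucc : (N : ℕ).succPNat = N + 1 := rfl
  rw [returnProb, Ccoef, if_neg N.ne_zero, hsucc]
  simp only [IsStochastic.toPMF_apply, ENNReal.ofReal_lt_one]
  split_ifs with h
  · rw [ENNReal.ofReal_div_of_pos (sub_pos.2 h), ENNReal.ofReal_sub _ (hK.1 _ _),
      ENNReal.ofReal_one]
  · rw [ENNReal.ofReal_one]
  · rw [ENNReal.ofReal_zero]

lemma toPMF_eq_traceDist {N : ℕ+} (hK : IsStochastic (K (N + 1))) {p p' : ℕ → ℝ}
    (hp : IsProbVec p) (hp' : IsProbVec p') (hsupp : ∀ a, (N : ℕ) < a → p' a = 0)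
    (h : ∀ a ≤ (N : ℕ), p' a = p a + p (N + 1) * Ccoef K N a) :
    ⇑hp'.toPMF = traceDist N (hK.toPMF (N + 1)) hp.toPMF := by
  ext a
  rw [traceDist, hp'.toPMF_apply]
  by_cases ha : a ≤ N
  · rw [Set.indicator_of_mem (Set.mem_Iic.2 ha), Pi.add_apply, Pi.smul_apply, smul_eq_mul,
      returnProb_toPMF, hp.toPMF_apply, hp.toPMF_apply, h a ha,
      ENNReal.ofReal_add (hp.1 _) (mul_nonneg (hp.1 _) (Ccoef_nonneg hK a)),
      ENNReal.ofReal_mul (hp.1 _)]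
  · rw [Set.indicator_of_notMem (by simpa using ha), hsupp a (not_le.1 ha), ENNReal.ofReal_zero]

lemma map_proj_markovLaw_of_compatible (hν : MemD1 ν) (hK : MemVTM K) (hc : Compatible ν K)
    (N : ℕ+) :
    (markovLaw (hν.isProbVec (N + 1)).toPMF (hK.1 (N + 1)).1.toPMF).map (proj N) =
      markovLaw (hν.isProbVec N).toPMF (hK.1 N).1.toPMF := by
  refine map_proj_markovLaw (hK.1 (N + 1)).toPMF_zero (hK.support_toPMF_subset (N + 1))
    (IsProbVec.support_toPMF_subset _ (hν.2.2.1 (N + 1))) (fun b hb => ?_)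
    (toPMF_eq_traceDist (hK.1 (N + 1)).1 _ _ (hν.2.2.1 N) (hc N))
  exact toPMF_eq_traceDist (hK.1 (N + 1)).1 _ _ (fun c hc => hK.apply_eq_zero_of_lt hb hc)
    fun c hc => hK.apply_eq_add_mul_Ccoef N hb hc

end Compatible

/-- For every compatible pair (ν, K) ∈ 𝓓₁ × 𝓚 there exists a probability space carrying
a virtual Markov chain whose level-N coordinate is a Markov chain with initial
distribution ν_N and transition matrix K_N. -/
theorem vmc_exists_of_compatible (ν : ℕ+ → ℕ → ℝ) (K : ℕ+ → ℕ → ℕ → ℝ)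
    (hν : MemD1 ν) (hK : MemVTM K) (hc : Compatible ν K) :
    ∃ (Ω : Type) (_ : MeasurableSpace Ω) (P : Measure Ω) (X : Ω → ℕ+ → ℕ → ℕ),
      IsProbabilityMeasure P ∧ IsVMC P X ∧
      ∀ N : ℕ+, IsMarkovChain P (fun i ω => X ω N i) (ν N) (K N) := by
  obtain ⟨P, hP, hlaw, hproj⟩ := exists_measure_pnat_pi_of_map_eq
    (μ := fun N => markovLaw (hν.isProbVec N).toPMF (hK.1 N).1.toPMF) (f := fun N => proj N)
    (fun N => measurable_proj N) (map_proj_markovLaw_of_compatible hν hK hc)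
  have hchain (N : ℕ+) : IsMarkovChain P (fun i ω => ω N i) (ν N) (K N) :=
    isMarkovChain_of_map_eq_markovLaw (measurable_pi_apply N) (hν.isProbVec N) (hK.1 N).1 (hlaw N)
  have hpath (N : ℕ+) : ∀ᵐ ω ∂P, ω N ∈ PathSpaceN N :=
    ae_of_ae_map (measurable_pi_apply N).aemeasurable <| hlaw N ▸
      ae_markovLaw_mem_pathSpaceN (hK.1 N).toPMF_zero (hK.support_toPMF_subset N)
        (IsProbVec.support_toPMF_subset _ (hν.2.2.1 N))
  refine ⟨ℕ+ → ℕ → ℕ, inferInstance, P, id, hP, ⟨?_, fun N => ?_⟩, hchain⟩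
  · filter_upwards [ae_all_iff.2 hpath, hproj] with ω h₁ h₂ using ⟨h₁, h₂⟩
  · exact ⟨ν N, K N, hν.isProbVec N, hν.2.2.1 N, hK.1 N, hchain N⟩
end
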